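/- arXiv:1003.0689 — 4 statements merged into one kernel-verified Lean document; each statement's English description precedes it below -/
import Mathlib

section
/- Let m ≥ 3, λ = (m−2)/2 and k ≥ 1. For fixed x ∈ ℝ^m∖{0} consider the polynomial in y given by H_k(y) = (|x||y|)^k C_k^λ(⟨ξ,η⟩), where ξ = x/|x| and η = y/|y|. Then, with ∂_y the Dirac operator in the variable y and y the vector variable in Cl_{0,m}, one has for all y ≠ 0: y ∂_y H_k(y) = −k (|x||y|)^k C_k^λ(⟨ξ,η⟩) − 2λ (|x||y|)^{k−1} (x∧y) C_{k−1}^{λ+1}(⟨ξ,η⟩). Consequently, writing H_k = F_k + G_k with F_k = (1 − k/(2k+m−2)) H_k − (2λ/(2k+m−2)) (x∧y) (|x||y|)^{k−1} C_{k−1}^{λ+1}(⟨ξ,η⟩) and G_k = (1/(2k+m−2)) [ k H_k + 2λ (x∧y)(|x||y|)^{k−1} C_{k−1}^{λ+1}(⟨ξ,η⟩) ], the polynomial F_k satisfies ∂_y F_k = 0. -/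
open scoped BigOperators
open MeasureTheory

noncomputable section

namespace CliffordFourier

/-- Concrete model of the complexified Clifford algebra `Cl_{0,m} ⊗ ℂ`:
an element is the family of its complex coefficients on the canonical basis
`e_S = e_{i₁} ⋯ e_{i_k}` (for `S = {i₁ < … < i_k} ⊆ {0,…,m-1}`). -/
def Cl (m : ℕ) : Type := Finset (Fin m) → ℂ

variable {m : ℕ}

instance : NormedAddCommGroup (Cl m) :=
  inferInstanceAs (NormedAddCommGroup (Finset (Fin m) → ℂ))
instance : NormedSpace ℝ (Cl m) :=
  inferInstanceAs (NormedSpace ℝ (Finset (Fin m) → ℂ))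
instance : Module ℂ (Cl m) := inferInstanceAs (Module ℂ (Finset (Fin m) → ℂ))
instance : CompleteSpace (Cl m) := inferInstanceAs (CompleteSpace (Finset (Fin m) → ℂ))

/-- The coefficient of `a` on the basis element `e_S`. -/
def coeff (a : Cl m) : Finset (Fin m) → ℂ := a

/-- Build an element of the Clifford algebra from its coefficients. -/
def ofCoeff (f : Finset (Fin m) → ℂ) : Cl m := f

/-- `1 = e_∅`. -/
instance : One (Cl m) := ⟨ofCoeff fun S => if S = (∅ : Finset (Fin m)) then 1 else 0⟩

/-- Clifford multiplication, determined by the relations `e_i e_j = - e_j e_i` (`i ≠ j`)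
and `e_i² = -1`; on basis elements it is given by
`e_T · e_U = (-1)^{#{(t,u) ∈ T×U : u < t}} · (-1)^{#(T∩U)} · e_{T Δ U}`. -/
instance : Mul (Cl m) :=
  ⟨fun a b => ofCoeff fun S => ∑ T : Finset (Fin m),
    ((-1 : ℂ) ^ ((((T ×ˢ (symmDiff T S)).filter fun p : Fin m × Fin m => p.2 < p.1).card)
        + (T ∩ (symmDiff T S)).card))
      * coeff a T * coeff b (symmDiff T S)⟩

/-- The generator `e_i`. -/
def e (m : ℕ) (i : Fin m) : Cl m := ofCoeff fun S => if S = {i} then 1 else 0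

/-- The embedding of a vector `x ∈ ℝ^m` as `x = Σ_i x_i e_i` in the Clifford algebra. -/
def vec (m : ℕ) (x : Fin m → ℝ) : Cl m := ∑ i : Fin m, (x i : ℂ) • e m i

/-- The Euclidean inner product `⟨x,y⟩ = Σ_i x_i y_i`. -/
def ip (x y : Fin m → ℝ) : ℝ := ∑ i, x i * y i

/-- The Euclidean norm `|x|`. -/
def nrm (x : Fin m → ℝ) : ℝ := Real.sqrt (ip x x)

/-- The wedge product `x∧y = Σ_{j<k} e_j e_k (x_j y_k - x_k y_j)`. -/
def wedge (m : ℕ) (x y : Fin m → ℝ) : Cl m :=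
  ∑ j : Fin m, ∑ k : Fin m,
    if j < k then ((x j * y k - x k * y j : ℝ) : ℂ) • (e m j * e m k) else 0

/-- Complex conjugation of the coefficients. -/
def cconj (a : Cl m) : Cl m := ofCoeff fun S => starRingEnd ℂ (coeff a S)

/-- The partial derivative `∂_{x_i}` of a Clifford-algebra-valued function. -/
def pder (i : Fin m) (f : (Fin m → ℝ) → Cl m) : (Fin m → ℝ) → Cl m :=
  fun x => fderiv ℝ f x (Pi.single i 1)

/-- The Dirac operator `∂_x = Σ_i e_i ∂_{x_i}`. -/
def dirac (f : (Fin m → ℝ) → Cl m) : (Fin m → ℝ) → Cl m :=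
  fun x => ∑ i : Fin m, e m i * pder i f x

/-- The Euler operator `E = Σ_i x_i ∂_{x_i}`. -/
def euler (f : (Fin m → ℝ) → Cl m) : (Fin m → ℝ) → Cl m :=
  fun x => ∑ i : Fin m, x i • pder i f x

/-- The Laplacian `Δ = Σ_i ∂_{x_i}²`. -/
def lapl (f : (Fin m → ℝ) → Cl m) : (Fin m → ℝ) → Cl m :=
  fun x => ∑ i : Fin m, pder i (pder i f) x

/-- The Gegenbauer polynomial `C_k^λ(w)`, defined through the standard three-term
recurrence, equivalent to the generating function `(1-2wt+t²)^{-λ} = Σ_k C_k^λ(w) t^k`. -/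
def geg (lam : ℝ) : ℕ → ℝ → ℝ
  | 0, _ => 1
  | 1, w => 2 * lam * w
  | (k+2), w => (2 * ((k : ℝ) + 1 + lam) * w * geg lam (k+1) w
      - ((k : ℝ) + 2 * lam) * geg lam k w) / ((k : ℝ) + 2)


theorem geg_AB (l w : ℝ) (k : ℕ) :
    ((k:ℝ) + 2) * geg l (k+2) w = 2 * l * (w * geg (l+1) (k+1) w - geg (l+1) k w) ∧
    ((k:ℝ) + 2 * l) * geg l k w * 1 = 2 * l * (geg (l+1) k w - (if k = 0 then 0 else w * geg (l+1) (k-1) w)) ∧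
    ((k:ℝ) + 1 + 2 * l) * geg l (k+1) w = 2 * l * (geg (l+1) (k+1) w - w * geg (l+1) k w) := by
  induction k with
  | zero => 
    simp only [geg]
    norm_num
    constructor <;> ring
  | succ k ih =>
    obtain ⟨h1, h2, h3⟩ := ih
    have h4 : (((k+1 : ℕ):ℝ) + 1 + 2 * l) * geg l (k+1+1) w
        = 2 * l * (geg (l+1) (k+1+1) w - w * geg (l+1) (k+1) w) := by
      have hk : (k:ℝ) + 2 ≠ 0 := by positivity
      have e : ((k:ℝ)+2) * geg (l+1) (k+2) w = (2 * ((k : ℝ) + 1 + (l+1)) * w * geg (l+1) (k+1) w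
      - ((k : ℝ) + 2 * (l+1)) * geg (l+1) k w) := by
        rw [geg]; field_simp
      apply mul_left_cancel₀ hk
      push_cast
      show _ * (_ * geg l (k+2) w) = _ * (_ * (geg (l+1) (k+2) w - _))
      linear_combination ((k:ℝ) + 2 + 2 * l) * h1 - 2 * l * e
    refine ⟨?_, ?_, h4⟩
    · have hk : (k:ℝ) + 3 ≠ 0 := by positivity
      have e : ((k:ℝ)+3) * geg l (k+3) w = (2 * ((k : ℝ) + 2 + l) * w * geg l (k+2) w
      - ((k : ℝ) + 1 + 2 * l) * geg l (k+1) w) := by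
        show _ * geg l (k+1+2) w = _
        rw [geg]; push_cast; rw [show (k:ℝ)+1+2 = k+3 by ring]; field_simp; ring
      push_cast at h4 ⊢
      show _ * geg l (k+3) w = 2 * l * (w * geg (l+1) (k+2) w - _)
      have h4' : ((k:ℝ) + 1 + 1 + 2 * l) * geg l (k+2) w
        = 2 * l * (geg (l+1) (k+2) w - w * geg (l+1) (k+1) w) := h4
      linear_combination e + w * h1 + w * h4' - h3
    · simp
      linear_combination h3

theorem geg_deriv (l w : ℝ) (k : ℕ) :
    HasDerivAt (geg l (k+1)) (2 * l * geg (l+1) k w) w := by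
  induction k using Nat.strong_induction_on with
  | _ k ih =>
  match k, ih with
  | 0, _ =>
    have : geg l (0+1) = fun w => 2 * l * w := by ext w; simp [geg]
    rw [this]
    simpa [geg] using (hasDerivAt_id w).const_mul (2*l)
  | 1, ih =>
    have : geg l (1+1) = fun w => (2 * (1 + l) * w * (2 * l * w) - 2 * l) / 2 := by
      ext w; simp [geg]
    rw [this]
    have := ((((hasDerivAt_id w).const_mul (2*(1+l))).mul ((hasDerivAt_id w).const_mul (2*l))).sub_const (2*l)).div_const 2
    refine this.congr_deriv ?_
    simp [geg]; ring
  | k+2, ih =>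
    have h1 := ih (k+1) (by omega)
    have h0 := ih k (by omega)
    have : geg l (k+2+1) = fun w => (2 * (((k+1:ℕ):ℝ) + 1 + l) * w * geg l (k+1+1) w
        - (((k+1:ℕ):ℝ) + 2 * l) * geg l (k+1) w) / (((k+1:ℕ):ℝ)+2) := by
      ext w; rw [geg]
    rw [this]
    have := ((((hasDerivAt_id w).const_mul (2 * (((k+1:ℕ):ℝ) + 1 + l))).mul h1).sub
      (h0.const_mul (((k+1:ℕ):ℝ) + 2 * l))).div_const (((k+1:ℕ):ℝ)+2)
    refine this.congr_deriv ?_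
    have hk : (k:ℝ) + 1 + 2 ≠ 0 := by positivity
    have hk' : (k:ℝ) + 2 ≠ 0 := by positivity
    have A := (geg_AB l w k).1
    have B := (geg_AB l w (k+1)).2.2
    have e : ((k:ℝ)+2) * geg (l+1) (k+2) w = (2 * ((k : ℝ) + 1 + (l+1)) * w * geg (l+1) (k+1) w
      - ((k : ℝ) + 2 * (l+1)) * geg (l+1) k w) := by
        rw [geg]; field_simp
    simp only [id]
    push_cast at *
    rw [div_eq_iff hk]
    change _ = 2 * l * geg (l+1) (k+2) w * _
    linear_combination A + B - 2 * l * e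

/-- derivative of the Gegenbauer polynomial -/
def gegd (l : ℝ) : ℕ → ℝ → ℝ
  | 0, _ => 0
  | (k+1), w => 2 * l * geg (l+1) k w

theorem geg_deriv' (l w : ℝ) (k : ℕ) : HasDerivAt (geg l k) (gegd l k w) w := by
  cases k with
  | zero =>
    have : geg l 0 = fun _ => 1 := by ext w; simp [geg]
    rw [this]; exact hasDerivAt_const _ _
  | succ k => exact geg_deriv l w k

theorem geg_ode (l w : ℝ) (n : ℕ) :
    2 * l * ((1 - w^2) * gegd (l+1) n w) - (2*l+1) * w * (2 * l * geg (l+1) n w)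
      + ((n:ℝ)+1) * (n + 1 + 2 * l) * geg l (n+1) w = 0 := by
  match n with
  | 0 => simp [gegd, geg]; ring
  | 1 => simp [gegd, geg]; ring
  | n+2 =>
    have A0 := (geg_AB l w (n+1)).1
    have A := (geg_AB (l+1) w n).1
    have B := (geg_AB (l+1) w n).2.2
    simp only [gegd]
    push_cast at *
    simp only [show n+1+1 = n+2 from rfl, show n+1+2 = n+3 from rfl] at *
    linear_combination (n+3+2*l) * A0 + 2 * l * w * A - 2 * l * B

/-- sign -/
def sg (i : Fin m) (U : Finset (Fin m)) : ℂ := ∏ u ∈ U, if u ≤ i then -1 else 1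

theorem sg_symm (i j : Fin m) (U : Finset (Fin m)) :
    sg j (symmDiff {i} U) = sg j U * (if i ≤ j then -1 else 1) := by
  unfold sg
  by_cases h : i ∈ U
  · have : symmDiff {i} U = U.erase i := by
      ext a; simp [Finset.mem_symmDiff]; by_cases ha : a = i <;> simp_all
    rw [this, ← Finset.mul_prod_erase U _ h]
    split_ifs <;> simp
  · have : symmDiff {i} U = insert i U := by
      ext a; simp [Finset.mem_symmDiff]; by_cases ha : a = i <;> simp_all
    rw [this, Finset.prod_insert h, mul_comm]

theorem sg_sq (i : Fin m) (U : Finset (Fin m)) : sg i U * sg i U = 1 := by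
  unfold sg
  rw [← Finset.prod_mul_distrib]
  apply Finset.prod_eq_one
  intros; split_ifs <;> simp

theorem sg_eq (i : Fin m) (U : Finset (Fin m)) :
    (-1:ℂ) ^ (((({i} ×ˢ U : Finset (Fin m × Fin m)).filter fun p : Fin m × Fin m => p.2 < p.1).card)
        + ({i} ∩ U).card) = sg i U := by
  have h1 : ((({i} ×ˢ U : Finset (Fin m × Fin m)).filter fun p : Fin m × Fin m => p.2 < p.1).card)
      = (U.filter (· < i)).card := by
    rw [Finset.singleton_product, Finset.filter_map, Finset.card_map]; rfl
  have h2 : ({i} ∩ U) = U.filter (· = i) := by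
    ext a; simp; tauto
  rw [h1, h2, ← Finset.card_union_of_disjoint]
  · rw [← Finset.filter_or]
    unfold sg
    rw [Finset.prod_ite]; simp [le_iff_lt_or_eq]
  · rw [Finset.disjoint_filter]; intro a _ h h'; exact absurd h' h.ne

theorem mul_apply' (a b : Cl m) (S) : coeff (a * b) S = ∑ T : Finset (Fin m),
    ((-1 : ℂ) ^ ((((T ×ˢ (symmDiff T S)).filter fun p : Fin m × Fin m => p.2 < p.1).card)
        + (T ∩ (symmDiff T S)).card))
      * coeff a T * coeff b (symmDiff T S) := rfl

theorem cl_ext {a b : Cl m} (h : ∀ S, coeff a S = coeff b S) : a = b := funext h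
theorem coeff_add (a b : Cl m) (S) : coeff (a + b) S = coeff a S + coeff b S := rfl
theorem coeff_neg (a : Cl m) (S) : coeff (-a) S = -coeff a S := rfl
theorem coeff_smul (r : ℝ) (a : Cl m) (S) : coeff (r • a) S = r * coeff a S := by
  show r • (coeff a S) = _
  simp
theorem coeff_csmul (r : ℂ) (a : Cl m) (S) : coeff (r • a) S = r * coeff a S := rfl
theorem ofReal_smul' (r : ℝ) (a : Cl m) : (r:ℂ) • a = r • a := by
  apply cl_ext; intro S; rw [coeff_smul, coeff_csmul]

/-- multiplication as a bilinear map -/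
def mulB (m : ℕ) : Cl m →ₗ[ℝ] Cl m →ₗ[ℝ] Cl m :=
  LinearMap.mk₂ ℝ (fun a b => a * b)
    (by intro a b c; apply cl_ext; intro S
        simp only [mul_apply', coeff_add, ← Finset.sum_add_distrib]
        apply Finset.sum_congr rfl; intros; ring)
    (by intro r b c; apply cl_ext; intro S
        simp only [mul_apply', coeff_smul, Finset.mul_sum]
        apply Finset.sum_congr rfl; intros; ring)
    (by intro a b c; apply cl_ext; intro S
        simp only [mul_apply', coeff_add, ← Finset.sum_add_distrib]
        apply Finset.sum_congr rfl; intros; ring)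
    (by intro r b c; apply cl_ext; intro S
        simp only [mul_apply', coeff_smul, Finset.mul_sum]
        apply Finset.sum_congr rfl; intros; ring)

theorem mulB_eq (a b : Cl m) : a * b = mulB m a b := rfl

theorem coeff_e_mul (i : Fin m) (b : Cl m) (S) :
    coeff (mulB m (e m i) b) S = sg i (symmDiff {i} S) * coeff b (symmDiff {i} S) := by
  rw [← mulB_eq, mul_apply', Finset.sum_eq_single {i}]
  · rw [sg_eq]; simp [e, coeff, ofCoeff]
  · intro T _ hT; simp [e, coeff, ofCoeff, hT]
  · simp

theorem e_e (i j : Fin m) (b : Cl m) :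
    mulB m (e m i) (mulB m (e m j) b) + mulB m (e m j) (mulB m (e m i) b)
      = (if i = j then (-2:ℝ) else 0) • b := by
  apply cl_ext; intro S
  simp only [coeff_add, coeff_e_mul, coeff_smul]
  by_cases h : i = j
  · subst h
    simp only [sg_symm, symmDiff_symmDiff_cancel_left]
    simp
    linear_combination (-2 * coeff b S) * sg_sq i S
  · rw [symmDiff_left_comm {i} {j} S]
    simp only [sg_symm, h]
    rcases lt_or_gt_of_ne h with h' | h' 
    · simp [h'.le, not_le.2 h']; ring
    · simp [h'.le, not_le.2 h']; ring

theorem e_one (i : Fin m) : mulB m (e m i) 1 = e m i := by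
  apply cl_ext; intro S
  rw [coeff_e_mul]
  show _ * (if symmDiff {i} S = ∅ then (1:ℂ) else 0) = if S = {i} then 1 else 0
  have : symmDiff {i} S = ∅ ↔ S = {i} := by
    rw [← Finset.bot_eq_empty, symmDiff_eq_bot]; exact eq_comm
  by_cases h : S = {i}
  · subst h; simp [sg]
  · simp [this, h]

theorem vec_eq (x : Fin m → ℝ) : vec m x = ∑ i, x i • e m i := by
  unfold vec; simp only [ofReal_smul']

theorem ip_comm (x y : Fin m → ℝ) : ip x y = ip y x := by
  unfold ip; simp only [mul_comm]

theorem vv (x y : Fin m → ℝ) (b : Cl m) :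
    mulB m (vec m x) (mulB m (vec m y) b)
      = ∑ i, ∑ j, (x i * y j) • mulB m (e m i) (mulB m (e m j) b) := by
  simp only [vec_eq, map_sum, map_smul, LinearMap.sum_apply, LinearMap.smul_apply]
  rw [Finset.sum_comm]
  simp only [Finset.smul_sum, smul_smul]
  try simp only [mul_comm]

theorem vv' (x y : Fin m → ℝ) (b : Cl m) :
    mulB m (vec m x) (mulB m (vec m y) b)
      = ∑ i, ∑ j, (y i * x j) • mulB m (e m j) (mulB m (e m i) b) := by
  rw [vv, Finset.sum_comm]
  simp only [mul_comm]

theorem vec_vec (x y : Fin m → ℝ) (b : Cl m) :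
    mulB m (vec m x) (mulB m (vec m y) b) + mulB m (vec m y) (mulB m (vec m x) b)
      = (-2 * ip x y) • b := by
  rw [vv x y, vv' y x]
  simp only [← Finset.sum_add_distrib, ← smul_add, e_e]
  rw [ip, Finset.mul_sum, Finset.sum_smul]
  apply Finset.sum_congr rfl; intro i _
  rw [Finset.sum_eq_single i]
  · simp [smul_smul]; ring_nf
  · intro j _ hj; simp [hj.symm]
  · simp

theorem vec_one (x : Fin m → ℝ) : mulB m (vec m x) 1 = vec m x := by
  simp only [vec_eq, map_sum, map_smul, LinearMap.sum_apply, LinearMap.smul_apply, e_one]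

theorem vec_sq (x : Fin m → ℝ) (b : Cl m) :
    mulB m (vec m x) (mulB m (vec m x) b) = (-ip x x) • b := by
  have h := vec_vec x x b
  rw [← two_smul ℝ] at h
  have := congrArg (fun z => (1/2:ℝ) • z) h
  simp only [smul_smul] at this
  convert this using 2 <;> ring_nf
  simp

theorem ip_single (x : Fin m → ℝ) (i : Fin m) : ip x (Pi.single i 1) = x i := by
  unfold ip
  rw [Finset.sum_eq_single i] <;> simp +contextual

theorem wedge_eq (x y : Fin m → ℝ) :
    wedge m x y = mulB m (vec m x) (vec m y) + ip x y • (1 : Cl m) := by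
  have h1 : mulB m (vec m x) (vec m y) = ∑ i, ∑ j, (x i * y j) • mulB m (e m i) (e m j) := by
    have := vv x y 1
    simpa only [vec_one, e_one] using this
  have hee : ∀ i j, mulB m (e m i) (e m j) + mulB m (e m j) (e m i)
      = (if i = j then (-2:ℝ) else 0) • (1 : Cl m) := by
    intro i j
    have := e_e i j (1 : Cl m)
    simpa only [e_one] using this
  have h2 : ip x y • (1 : Cl m) = - ∑ i, ∑ j, if i = j then (x i * y j) • mulB m (e m i) (e m j) else 0 := by
    simp only [Finset.sum_ite_eq, Finset.mem_univ, if_true, ip, Finset.sum_smul]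
    rw [← Finset.sum_neg_distrib]
    apply Finset.sum_congr rfl; intro i _
    have := e_e i i (1 : Cl m)
    have h3 := vec_sq (Pi.single i 1) (1 : Cl m)
    have h4 : vec m (Pi.single i 1) = e m i := by
      rw [vec_eq, Finset.sum_eq_single i] <;> simp +contextual
    rw [vec_one, h4] at h3
    rw [h3, ip_single]; simp
  have h5 : wedge m x y = (∑ i, ∑ j, if i < j then (x i * y j) • mulB m (e m i) (e m j) else 0)
      + ∑ i, ∑ j, if j < i then (x i * y j) • mulB m (e m i) (e m j) else 0 := by
    rw [Finset.sum_comm (f := fun i j => if j < i then (x i * y j) • mulB m (e m i) (e m j) else 0)]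
    unfold wedge
    simp only [← Finset.sum_add_distrib]
    refine Finset.sum_congr rfl fun i _ => Finset.sum_congr rfl fun j _ => ?_
    by_cases h : i < j
    · have := hee i j
      simp only [h.ne, if_false, zero_smul] at this
      have := eq_neg_of_add_eq_zero_right this
      simp only [h, if_true, ofReal_smul', mulB_eq]
      rw [this, sub_smul, smul_neg, sub_eq_add_neg]
    · simp [h]
  rw [h1, h2, h5]
  simp only [← Finset.sum_add_distrib, ← sub_eq_add_neg, ← Finset.sum_sub_distrib]
  refine Finset.sum_congr rfl fun i _ => Finset.sum_congr rfl fun j _ => ?_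
  rcases lt_trichotomy i j with h | h | h
  · simp [h, h.ne, h.le, not_lt.2 h.le]
  · simp [h]
  · simp [h, h.ne', not_lt.2 h.le]

theorem wedge_eq' (x y : Fin m → ℝ) :
    wedge m x y = - mulB m (vec m y) (vec m x) - ip x y • (1 : Cl m) := by
  have := vec_vec x y 1
  rw [vec_one, vec_one, mul_smul, neg_smul, two_smul] at this
  rw [wedge_eq, eq_sub_of_add_eq this]
  abel

theorem vec_single (i : Fin m) : vec m (Pi.single i 1) = e m i := by
  rw [vec_eq, Finset.sum_eq_single i] <;> simp +contextual

theorem x_wedge (x y : Fin m → ℝ) :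
    mulB m (vec m x) (wedge m x y) = (-ip x x) • vec m y + ip x y • vec m x := by
  rw [wedge_eq, map_add, map_smul, vec_sq, vec_one]

theorem y_wedge (x y : Fin m → ℝ) :
    mulB m (vec m y) (wedge m x y) = ip y y • vec m x - ip x y • vec m y := by
  rw [wedge_eq', map_sub, map_neg, map_smul, vec_sq, vec_one]
  simp

theorem e_wedge (x : Fin m → ℝ) :
    ∑ i, mulB m (e m i) (wedge m x (Pi.single i 1)) = ((m:ℝ) - 1) • vec m x := by
  have : ∀ i, mulB m (e m i) (wedge m x (Pi.single i 1)) = vec m x - x i • e m i := by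
    intro i
    rw [← vec_single, y_wedge, ip_single, ip_single]
    simp
  simp only [this, Finset.sum_sub_distrib, ← vec_eq]
  simp only [Finset.sum_const, Finset.card_univ, Fintype.card_fin, sub_smul, one_smul]
  rw [← Nat.cast_smul_eq_nsmul ℝ]

theorem y_x (x y : Fin m → ℝ) :
    mulB m (vec m y) (vec m x) = -(wedge m x y) - ip x y • (1 : Cl m) := by
  rw [wedge_eq']; abel

/-- `ip x` as a continuous linear map -/
def ipL (x : Fin m → ℝ) : (Fin m → ℝ) →L[ℝ] ℝ :=
  ∑ i, x i • ContinuousLinearMap.proj (R := ℝ) (φ := fun _ : Fin m => ℝ) i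

theorem ipL_apply (x y : Fin m → ℝ) : ipL x y = ip x y := by
  simp [ipL, ip]

theorem ip_self_pos {y : Fin m → ℝ} (hy : y ≠ 0) : 0 < ip y y := by
  obtain ⟨i, hi⟩ := Function.ne_iff.1 hy
  unfold ip
  apply Finset.sum_pos' (fun i _ => mul_self_nonneg _)
  exact ⟨i, Finset.mem_univ _, mul_self_pos.2 hi⟩

theorem hasF_ip (x y : Fin m → ℝ) : HasFDerivAt (fun v => ip x v) (ipL x) y := by
  have := (ipL x).hasFDerivAt (x := y)
  refine this.congr_of_eventuallyEq (Filter.Eventually.of_forall fun v => (ipL_apply x v).symm)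

theorem hasF_nrm {y : Fin m → ℝ} (hy : y ≠ 0) :
    HasFDerivAt (fun v : Fin m → ℝ => nrm v) ((1 / nrm y) • ipL y) y := by
  have h : HasFDerivAt (fun v : Fin m → ℝ => ip v v) ((2:ℝ) • ipL y) y := by
    have : HasFDerivAt (fun v : Fin m → ℝ => ∑ i, v i * v i)
        (∑ i, (y i • ContinuousLinearMap.proj (R := ℝ) (φ := fun _ : Fin m => ℝ) i
          + y i • ContinuousLinearMap.proj (R := ℝ) (φ := fun _ : Fin m => ℝ) i)) y := by
      apply HasFDerivAt.fun_sum
      intro i _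
      exact (hasFDerivAt_apply i y).mul (hasFDerivAt_apply i y)
    refine this.congr_fderiv ?_
    rw [Finset.sum_add_distrib, two_smul]; rfl
  have := h.sqrt (ip_self_pos hy).ne'
  refine this.congr_fderiv ?_
  rw [smul_smul]
  congr 1
  show 1 / (2 * nrm y) * 2 = _
  field_simp

theorem nrm_pos {y : Fin m → ℝ} (hy : y ≠ 0) : 0 < nrm y := Real.sqrt_pos.2 (ip_self_pos hy)

theorem nrm_sq (y : Fin m → ℝ) : nrm y ^ 2 = ip y y :=
  Real.sq_sqrt (Finset.sum_nonneg fun i _ => mul_self_nonneg _)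

theorem hasF_main {x y : Fin m → ℝ} (hx : x ≠ 0) (hy : y ≠ 0) (n : ℕ) (f : ℝ → ℝ) (d : ℝ)
    (hf : HasDerivAt f d (ip x y / (nrm x * nrm y))) :
    HasFDerivAt (fun v => (nrm x * nrm v)^n * f (ip x v / (nrm x * nrm v)))
      (((nrm x * nrm y)^n * d / (nrm x * nrm y)) • ipL x +
       ((n * (nrm x * nrm y)^n * f (ip x y / (nrm x * nrm y))
         - (nrm x * nrm y)^n * (ip x y / (nrm x * nrm y)) * d) / ip y y) • ipL y) y := by
  have hX := nrm_pos hx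
  have hY := nrm_pos hy
  have h1 := (hasF_nrm hy).const_mul (nrm x)
  have hr : nrm x * nrm y ≠ 0 := by positivity
  have h2 : HasFDerivAt (fun v => ip x v / (nrm x * nrm v))
     ((1/(nrm x * nrm y)) • ipL x - (ip x y / (nrm x * nrm y ^ 3)) • ipL y) y := by
    have h3 := (hasDerivAt_inv hr).comp_hasFDerivAt y h1
    have h4 := (hasF_ip x y).mul h3
    simp only [div_eq_mul_inv]
    refine h4.congr_fderiv ?_
    ext v
    simp
    field_simp
    ring
  have h5 := hf.comp_hasFDerivAt y h2
  have h6 := (h1.pow n).mul h5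
  refine h6.congr_fderiv ?_
  ext v
  rw [← nrm_sq]
  cases n with
  | zero =>
    simp
    field_simp
    ring
  | succ n =>
    simp
    field_simp
    ring


/-- `wedge x` as a linear map -/
def wedgeL (x : Fin m → ℝ) : (Fin m → ℝ) →ₗ[ℝ] Cl m where
  toFun y := wedge m x y
  map_add' a b := by
    have h : vec m (a + b) = vec m a + vec m b := by
      simp [vec_eq, add_smul, Finset.sum_add_distrib]
    have h2 : ip x (a + b) = ip x a + ip x b := by
      simp [ip, mul_add, Finset.sum_add_distrib]
    simp only [wedge_eq, h, h2, map_add, add_smul]; abel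
  map_smul' r a := by
    have h : vec m (r • a) = r • vec m a := by
      simp [vec_eq, Finset.smul_sum, smul_smul]
    have h2 : ip x (r • a) = r * ip x a := by
      simp only [ip, Finset.mul_sum]
      apply Finset.sum_congr rfl; intros; simp; ring
    simp only [wedge_eq, h, h2, map_smul, smul_add, smul_smul, RingHom.id_apply]

theorem hasF_wedge (x y : Fin m → ℝ) :
    HasFDerivAt (fun v => wedge m x v) (LinearMap.toContinuousLinearMap (wedgeL x)) y :=
  (LinearMap.toContinuousLinearMap (wedgeL x)).hasFDerivAt (x := y)

theorem dirac_scalar {x y : Fin m → ℝ} {g : (Fin m → ℝ) → ℝ} {a b : ℝ}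
    (h : HasFDerivAt g (a • ipL x + b • ipL y) y) :
    dirac (fun v => g v • (1 : Cl m)) y = a • vec m x + b • vec m y := by
  unfold dirac pder
  rw [(h.smul_const (1 : Cl m)).fderiv]
  simp only [vec_eq, Finset.smul_sum, ← Finset.sum_add_distrib]
  apply Finset.sum_congr rfl; intro i _
  rw [mulB_eq]
  simp only [ContinuousLinearMap.smulRight_apply, _root_.add_apply,
    _root_.smul_apply, ipL_apply, ip_single, map_smul, map_add, e_one,
    smul_eq_mul, add_smul, smul_smul]

theorem dirac_wedge {x y : Fin m → ℝ} {g q : (Fin m → ℝ) → ℝ} {a b c d : ℝ}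
    (h : HasFDerivAt g (a • ipL x + b • ipL y) y)
    (h' : HasFDerivAt q (c • ipL x + d • ipL y) y) :
    dirac (fun v => g v • (1 : Cl m) - q v • wedge m x v) y
      = (a - c * ip x y - d * ip y y - q y * (m - 1)) • vec m x
        + (b + c * ip x x + d * ip x y) • vec m y := by
  have e1 : dirac (fun v => g v • (1 : Cl m) - q v • wedge m x v) y
      = dirac (fun v => g v • (1 : Cl m)) y
        - (mulB m (c • vec m x + d • vec m y) (wedge m x y)
          + q y • ∑ i, mulB m (e m i) (wedge m x (Pi.single i 1))) := by
    unfold dirac pder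
    have hh := (h.smul_const (1 : Cl m)).fun_sub (h'.fun_smul (hasF_wedge x y))
    rw [hh.fderiv, (h.smul_const (1 : Cl m)).fderiv]
    simp only [vec_eq, Finset.smul_sum, ← Finset.sum_add_distrib, map_sum,
      LinearMap.sum_apply, ← Finset.sum_sub_distrib]
    apply Finset.sum_congr rfl; intro i _
    rw [mulB_eq, mulB_eq]
    simp only [ContinuousLinearMap.smulRight_apply, _root_.add_apply,
      _root_.sub_apply, LinearMap.coe_toContinuousLinearMap',
      _root_.smul_apply, ipL_apply, ip_single, map_smul, map_add, map_sub,
      LinearMap.add_apply, LinearMap.smul_apply, smul_eq_mul,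
      add_smul, smul_smul]
    show _ - (_ • mulB m (e m i) (wedge m x (Pi.single i 1)) + _) = _
    abel
  rw [e1, dirac_scalar h, e_wedge, map_add, map_smul, map_smul, LinearMap.add_apply,
    LinearMap.smul_apply, LinearMap.smul_apply, x_wedge, y_wedge]
  module

/-- For `λ = (m-2)/2` and the harmonic polynomial `H_k(y) = (|x||y|)^k C_k^λ(⟨ξ,η⟩)`
(`ξ = x/|x|`, `η = y/|y|`), one has
`y ∂_y H_k = -k (|x||y|)^k C_k^λ(⟨ξ,η⟩) - 2λ (|x||y|)^{k-1} (x∧y) C_{k-1}^{λ+1}(⟨ξ,η⟩)`;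
consequently the component `F_k` of the monogenic decomposition `H_k = F_k + G_k`
satisfies `∂_y F_k = 0`. -/
theorem monogenic_decomposition (m : ℕ) (hm : 3 ≤ m) (k : ℕ) (hk : 1 ≤ k)
    (x : Fin m → ℝ) (hx : x ≠ 0) :
    (∀ y : Fin m → ℝ, y ≠ 0 →
      vec m y *
        dirac (fun v =>
          (((nrm x * nrm v)^k * geg (((m:ℝ) - 2)/2) k (ip x v / (nrm x * nrm v)) : ℝ)) •
            (1 : Cl m)) y
        = (-(k : ℝ) * (nrm x * nrm y)^k * geg (((m:ℝ) - 2)/2) k (ip x y / (nrm x * nrm y)))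
              • (1 : Cl m)
          + (-(2 * (((m:ℝ) - 2)/2)) * (nrm x * nrm y)^(k-1)
              * geg (((m:ℝ) - 2)/2 + 1) (k-1) (ip x y / (nrm x * nrm y))) • wedge m x y) ∧
    (∀ y : Fin m → ℝ, y ≠ 0 →
      dirac (fun v =>
        ((1 - (k : ℝ)/(2*(k:ℝ) + (m:ℝ) - 2)) *
            ((nrm x * nrm v)^k * geg (((m:ℝ) - 2)/2) k (ip x v / (nrm x * nrm v)))) • (1 : Cl m)
        - ((2 * (((m:ℝ) - 2)/2) / (2*(k:ℝ) + (m:ℝ) - 2)) *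
            ((nrm x * nrm v)^(k-1)
              * geg (((m:ℝ) - 2)/2 + 1) (k-1) (ip x v / (nrm x * nrm v)))) • wedge m x v) y
      = 0) := by
  obtain ⟨n, rfl⟩ : ∃ n, k = n + 1 := ⟨k - 1, by omega⟩
  simp only [Nat.add_sub_cancel]
  have hX := nrm_pos hx
  constructor
  · intro y hy
    have hY := nrm_pos hy
    have H := hasF_main hx hy (n+1) _ _ (geg_deriv (((m:ℝ) - 2)/2) (ip x y / (nrm x * nrm y)) n)
    rw [dirac_scalar H, mulB_eq, map_add, map_smul, map_smul, y_x]
    have hyy : mulB m (vec m y) (vec m y) = (-ip y y) • (1 : Cl m) := by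
      have := vec_sq y 1
      rwa [vec_one] at this
    rw [hyy, ← nrm_sq]
    match_scalars
    all_goals
      generalize geg _ n _ = D
      generalize geg _ (n+1) _ = C
      push_cast
      field_simp
      ring
  · intro y hy
    have hY := nrm_pos hy
    set l : ℝ := ((m:ℝ) - 2)/2 with hl
    set w := ip x y / (nrm x * nrm y) with hw
    have hm' : (m:ℝ) = 2 * l + 2 := by rw [hl]; ring
    have hl0 : 0 < l := by
      have : (3:ℝ) ≤ m := by exact_mod_cast hm
      rw [hl]; linarith
    have H := (hasF_main hx hy (n+1) _ _ (geg_deriv l w n)).const_mul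
      (1 - ((n+1:ℕ):ℝ)/(2*((n+1:ℕ):ℝ) + (m:ℝ) - 2))
    have Q := (hasF_main hx hy n _ _ (geg_deriv' (l+1) w n)).const_mul
      (2 * l / (2*((n+1:ℕ):ℝ) + (m:ℝ) - 2))
    rw [smul_add, smul_smul, smul_smul] at H Q
    rw [dirac_wedge H Q]
    have ode := geg_ode l w n
    have hip : ip x y = w * (nrm x * nrm y) := by rw [hw]; field_simp
    rw [← hw, ← nrm_sq, ← nrm_sq, hip, hm']
    have hN : (n:ℝ) + 1 + l ≠ 0 := by positivity
    have hN2 : 2 * ((n:ℝ) + 1) + (2 * l + 2) - 2 ≠ 0 := by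
      intro h; apply hN; linarith
    push_cast
    generalize geg l (n+1) w = C at *
    generalize geg (l+1) n w = D at *
    generalize gegd (l+1) n w = D' at *
    clear_value w
    generalize nrm x = X at *
    generalize nrm y = Y at *
    have z1 : ∀ a b : ℝ, a = 0 → b = 0 → a • vec m x + b • vec m y = 0 := by
      rintro _ _ rfl rfl; simp
    have e1 : 1 - ((n:ℝ)+1) / (2 * ((n:ℝ) + 1) + (2 * l + 2) - 2)
          = ((n:ℝ) + 1 + 2 * l) / (2 * ((n:ℝ) + 1) + (2 * l + 2) - 2) := by
      rw [eq_div_iff hN2, sub_mul, div_mul_cancel₀ _ hN2]; ring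
    rw [e1]
    generalize 2 * ((n:ℝ) + 1) + (2 * l + 2) - 2 = M at *
    apply z1
    · field_simp
      ring
    · have : (X*Y)^(n+1) / (M * Y^2) * (2 * l * ((1 - w^2) * D') - (2*l+1) * w * (2 * l * D)
        + ((n:ℝ)+1) * (n + 1 + 2 * l) * C) = 0 := by rw [ode, mul_zero]
      rw [← this]
      field_simp
      ring

end CliffordFourier
end
end

section
/- Let m = 2. For x, y ∈ ℝ²∖{0} write w = cos θ = ⟨x,y⟩/(|x||y|) and z = |x||y|, and define the Clifford–Fourier kernel K_−(x,y) = B_0(w,z) + (x∧y) C_0(w,z), where B_0(w,z) = J_0(z) + 2 Σ_{k≥1} J_{2k}(z) cos(2kθ) and C_0(w,z) = (2/z) Σ_{k≥1} J_{2k−1}(z) sin((2k−1)θ)/sin θ. Then K_−(x,y) = cos t + (x∧y) (sin t)/t, where t = |x∧y| = √(|x|²|y|² − ⟨x,y⟩²); equivalently K_−(x,y) = cos(x₁y₂ − x₂y₁) + e₁e₂ sin(x₁y₂ − x₂y₁). -/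
open scoped BigOperators
open MeasureTheory

noncomputable section

namespace CliffordFourier

variable {m : ℕ}

/-- The Bessel function of the first kind
`J_a(z) = Σ_{j≥0} (-1)^j (z/2)^{2j+a} / (j! Γ(j+a+1))`. -/
def besselJ (a z : ℝ) : ℝ :=
  ∑' j : ℕ, ((-1 : ℝ)^j * (z/2) ^ (2*(j:ℝ) + a)) / (j.factorial * Real.Gamma ((j : ℝ) + a + 1))

theorem aux_bessel_nat (n : ℕ) (z : ℝ) : besselJ (n:ℝ) z =
    ∑' j : ℕ, ((-1 : ℝ)^j * (z/2) ^ (2*j + n)) / (j.factorial * (j+n).factorial) := by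
  unfold besselJ
  congr 1
  funext j
  have h1 : (2*(j:ℝ) + n) = ((2*j+n : ℕ) : ℝ) := by push_cast; ring
  have h2 : ((j:ℝ) + n + 1) = ((j+n : ℕ) : ℝ) + 1 := by push_cast; ring
  rw [h1, Real.rpow_natCast, h2, Real.Gamma_nat_eq_factorial]

def auxEquiv : ℤ × ℕ ≃ ℕ × ℕ where
  toFun p := (p.2 + p.1.toNat, p.2 + (-p.1).toNat)
  invFun p := ((p.1:ℤ) - p.2, min p.1 p.2)
  left_inv := by
    rintro ⟨n, j⟩
    ext
    · simp only; omega
    · simp only; omega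
  right_inv := by
    rintro ⟨a, b⟩
    ext
    · simp only; omega
    · simp only; omega

def auxF (z : ℝ) (u : ℂ) (p : ℕ × ℕ) : ℂ :=
  (((z/2 : ℝ) : ℂ) * u)^p.1 / (p.1.factorial : ℂ) *
    ((-((z/2 : ℝ) : ℂ) * u⁻¹)^p.2 / (p.2.factorial : ℂ))

theorem aux_exp (w : ℂ) :
    HasSum (fun n : ℕ => w^n / (n.factorial : ℂ)) (Complex.exp w) := by
  rw [Complex.exp_eq_exp_ℂ]
  exact NormedSpace.expSeries_div_hasSum_exp w

theorem aux_exp_norm (w : ℂ) : Summable (fun n : ℕ => ‖w^n / (n.factorial : ℂ)‖) :=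
  NormedSpace.norm_expSeries_div_summable w

theorem aux_gen_mul (f g : ℕ → ℂ) (a b : ℂ) (hf : HasSum f a) (hg : HasSum g b)
    (hf' : Summable fun n => ‖f n‖) (hg' : Summable fun n => ‖g n‖) :
    HasSum (fun p : ℕ × ℕ => f p.1 * g p.2) (a * b) := by
  have hs : Summable (fun p : ℕ × ℕ => f p.1 * g p.2) := summable_mul_of_summable_norm hf' hg'
  have h2 := hs.hasSum
  rwa [← hf'.of_norm.tsum_mul_tsum hg'.of_norm hs, hf.tsum_eq, hg.tsum_eq] at h2

theorem aux_exp_mul (v w : ℂ) : HasSum (fun p : ℕ × ℕ => v^p.1 / (p.1.factorial : ℂ) *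
      (w^p.2 / (p.2.factorial : ℂ))) (Complex.exp v * Complex.exp w) :=
  aux_gen_mul (fun n => v^n / (n.factorial : ℂ)) (fun n => w^n / (n.factorial : ℂ)) _ _
    (aux_exp v) (aux_exp w) (aux_exp_norm v) (aux_exp_norm w)

theorem auxF_hasSum (z : ℝ) (u : ℂ) : HasSum (auxF z u)
    (Complex.exp (((z/2 : ℝ) : ℂ) * u) * Complex.exp (-((z/2 : ℝ) : ℂ) * u⁻¹)) :=
  aux_exp_mul _ _

theorem aux_pos (z : ℝ) (u : ℂ) (hu : u ≠ 0) (n : ℕ) :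
    ∑' j : ℕ, auxF z u (auxEquiv ((n:ℤ), j)) = u^n * (besselJ (n:ℝ) z : ℂ) := by
  rw [aux_bessel_nat, Complex.ofReal_tsum, ← tsum_mul_left]
  congr 1
  funext j
  have e1 : auxEquiv ((n:ℤ), j) = (j + n, j) := by
    simp [auxEquiv]
  rw [e1]
  simp only [auxF]
  have h1 : ((j.factorial : ℕ) : ℂ) ≠ 0 := by exact_mod_cast j.factorial_ne_zero
  have h2 : (((j+n).factorial : ℕ) : ℂ) ≠ 0 := by exact_mod_cast (j+n).factorial_ne_zero
  push_cast
  have h3 : u ^ j * (u⁻¹)^j = 1 := by rw [← mul_pow, mul_inv_cancel₀ hu, one_pow]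
  rw [mul_pow, mul_pow, neg_pow]
  rw [div_mul_div_comm, mul_div_assoc', mul_comm (((j+n).factorial : ℕ) : ℂ)]
  congr 1
  rw [pow_add u]
  linear_combination (((z:ℂ)/2)^(j+n) * u^n * (-1)^j * ((z:ℂ)/2)^j) * h3

theorem aux_neg (z : ℝ) (u : ℂ) (hu : u ≠ 0) (n : ℕ) :
    ∑' j : ℕ, auxF z u (auxEquiv (-(n:ℤ), j)) = (-1)^n * (u⁻¹)^n * (besselJ (n:ℝ) z : ℂ) := by
  rw [aux_bessel_nat, Complex.ofReal_tsum, ← tsum_mul_left]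
  congr 1
  funext j
  have e1 : auxEquiv (-(n:ℤ), j) = (j, j + n) := by
    simp [auxEquiv]
  rw [e1]
  simp only [auxF]
  push_cast
  have h3 : u ^ j * (u⁻¹)^j = 1 := by rw [← mul_pow, mul_inv_cancel₀ hu, one_pow]
  rw [mul_pow, mul_pow, neg_pow]
  rw [div_mul_div_comm, mul_div_assoc']
  congr 1
  rw [pow_add (u⁻¹)]
  linear_combination (((z:ℂ)/2)^(j+n) * (u⁻¹)^n * (-1)^(j+n) * ((z:ℂ)/2)^j) * h3

theorem aux_main (z θ : ℝ) : HasSum (fun n : ℕ =>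
    (besselJ (n:ℝ) z : ℂ) * (Complex.exp (θ * Complex.I) ^ n
      + (-1)^n * ((Complex.exp (θ * Complex.I))⁻¹)^n))
    (Complex.exp ((z * Real.sin θ : ℝ) * Complex.I) + (besselJ 0 z : ℂ)) := by
  set u := Complex.exp (θ * Complex.I) with hu
  have hu0 : u ≠ 0 := Complex.exp_ne_zero _
  have h := (auxEquiv.hasSum_iff.mpr (auxF_hasSum z u))
  have h2 := h.prod_fiberwise (fun n => (h.summable.prod_factor n).hasSum)
  have h3 := h2.nat_add_neg
  have e0 := aux_pos z u hu0 0
  simp only [Function.comp] at h3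
  simp only [Nat.cast_zero, pow_zero, one_mul] at e0
  rw [e0, ← Complex.exp_add] at h3
  convert h3 using 1
  · funext n
    rw [aux_pos z u hu0 n, aux_neg z u hu0 n]
    ring
  · congr 2
    have e1 : u⁻¹ = Complex.exp (-θ * Complex.I) := by
      rw [hu, ← Complex.exp_neg]; congr 1; ring
    rw [e1, hu]
    push_cast
    rw [Complex.sin]
    linear_combination (-(z:ℂ)/2 * (Complex.exp (-θ * Complex.I) - Complex.exp (θ * Complex.I))) *
      (-Complex.I_sq)

theorem aux_pw (θ : ℝ) (n : ℕ) : Complex.exp (θ * Complex.I) ^ n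
      = Real.cos (n * θ) + Real.sin (n * θ) * Complex.I := by
  rw [← Complex.exp_nat_mul, ← mul_assoc, Complex.exp_mul_I]
  push_cast; rfl

theorem aux_pw' (θ : ℝ) (n : ℕ) : ((Complex.exp (θ * Complex.I))⁻¹) ^ n
      = Real.cos (n * θ) - Real.sin (n * θ) * Complex.I := by
  have := aux_pw (-θ) n
  rw [← Complex.exp_neg]
  rw [mul_neg, Real.cos_neg, Real.sin_neg] at this
  push_cast at this ⊢
  rw [← neg_mul, this]; ring

theorem aux_re (z θ : ℝ) : HasSum (fun n : ℕ =>
    besselJ (n:ℝ) z * ((1 + (-1)^n) * Real.cos (n * θ)))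
    (Real.cos (z * Real.sin θ) + besselJ 0 z) := by
  have h := Complex.hasSum_re (aux_main z θ)
  rw [Complex.add_re, Complex.exp_ofReal_mul_I_re, Complex.ofReal_re] at h
  convert h using 1
  funext n
  rw [aux_pw, aux_pw']
  have : (besselJ (n:ℝ) z : ℂ) * (Real.cos (n * θ) + Real.sin (n * θ) * Complex.I +
     (-1)^n * (Real.cos (n * θ) - Real.sin (n * θ) * Complex.I)) =
     ((besselJ (n:ℝ) z * ((1 + (-1)^n) * Real.cos (n * θ)) : ℝ) : ℂ) +
     ((besselJ (n:ℝ) z * ((1 - (-1)^n) * Real.sin (n * θ)) : ℝ) : ℂ) * Complex.I := by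
    push_cast; ring
  rw [this, Complex.add_re, Complex.re_ofReal_mul, Complex.I_re, Complex.ofReal_re]
  ring

theorem aux_im (z θ : ℝ) : HasSum (fun n : ℕ =>
    besselJ (n:ℝ) z * ((1 - (-1)^n) * Real.sin (n * θ)))
    (Real.sin (z * Real.sin θ)) := by
  have h := Complex.hasSum_im (aux_main z θ)
  rw [Complex.add_im, Complex.exp_ofReal_mul_I_im, Complex.ofReal_im, add_zero] at h
  convert h using 1
  funext n
  rw [aux_pw, aux_pw']
  have : (besselJ (n:ℝ) z : ℂ) * (Real.cos (n * θ) + Real.sin (n * θ) * Complex.I +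
     (-1)^n * (Real.cos (n * θ) - Real.sin (n * θ) * Complex.I)) =
     ((besselJ (n:ℝ) z * ((1 + (-1)^n) * Real.cos (n * θ)) : ℝ) : ℂ) +
     ((besselJ (n:ℝ) z * ((1 - (-1)^n) * Real.sin (n * θ)) : ℝ) : ℂ) * Complex.I := by
    push_cast; ring
  rw [this, Complex.add_im, Complex.im_ofReal_mul, Complex.I_im, Complex.ofReal_im]
  ring

theorem aux_B (z θ : ℝ) :
    besselJ 0 z + 2 * ∑' k : ℕ, besselJ (2*(k:ℝ) + 2) z * Real.cos ((2*(k:ℝ) + 2) * θ)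
      = Real.cos (z * Real.sin θ) := by
  have h := aux_re z θ
  have hi : Function.Injective (fun k : ℕ => 2 * k) := fun a b h => by simpa using h
  rw [← hi.hasSum_iff] at h
  · have h2 := (hasSum_nat_add_iff' 1).mpr h
    have h3 := h2.tsum_eq
    simp only [Function.comp, Finset.range_one, Finset.sum_singleton] at h3
    rw [← tsum_mul_left]
    have : ∀ k : ℕ, besselJ ((2*(k+1) : ℕ):ℝ) z * ((1 + (-1)^(2*(k+1))) *
        Real.cos ((2*(k+1) : ℕ) * θ)) =
        2 * (besselJ (2*(k:ℝ) + 2) z * Real.cos ((2*(k:ℝ) + 2) * θ)) := by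
      intro k
      rw [pow_mul]
      have : ((2*(k+1) : ℕ):ℝ) = 2*(k:ℝ)+2 := by push_cast; ring
      rw [this]; norm_num; ring
    simp only [this] at h3
    rw [h3]
    norm_num
    ring
  · intro n hn
    have : Odd n := by
      rw [← Nat.not_even_iff_odd]
      rintro ⟨k, hk⟩
      exact hn ⟨k, by simp only; omega⟩
    simp [this.neg_one_pow]

theorem aux_C (z θ : ℝ) :
    2 * ∑' k : ℕ, besselJ (2*(k:ℝ) + 1) z * Real.sin ((2*(k:ℝ) + 1) * θ)
      = Real.sin (z * Real.sin θ) := by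
  have h := aux_im z θ
  have hi : Function.Injective (fun k : ℕ => 2 * k + 1) := fun a b h => by simpa using h
  rw [← hi.hasSum_iff] at h
  · have h3 := h.tsum_eq
    rw [← h3, ← tsum_mul_left]
    congr 1
    funext k
    simp only [Function.comp]
    rw [pow_succ, pow_mul]
    push_cast
    norm_num
    ring
  · intro n hn
    have : Even n := by
      rw [← Nat.not_odd_iff_even]
      rintro ⟨k, hk⟩
      exact hn ⟨k, by simp only; omega⟩
    simp [this.neg_one_pow]

theorem aux_wedge (x y : Fin 2 → ℝ) :
    wedge 2 x y = ((x 0 * y 1 - x 1 * y 0 : ℝ) : ℂ) • (e 2 0 * e 2 1) := by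
  simp [wedge, Fin.sum_univ_two]

theorem aux_smul (r s : ℝ) (v : Cl 2) : r • ((s : ℂ) • v) = (r * s) • v := by
  funext S
  change (r : ℂ) * ((s : ℂ) * v S) = ((r * s : ℝ) : ℂ) * v S
  push_cast; ring

theorem aux_ip_pos (x : Fin 2 → ℝ) (hx : x ≠ 0) : 0 < ip x x := by
  simp only [ip, Fin.sum_univ_two]
  by_contra hc
  apply hx
  have h0 : x 0 = 0 := by nlinarith [mul_self_nonneg (x 0), mul_self_nonneg (x 1)]
  have h1 : x 1 = 0 := by nlinarith [mul_self_nonneg (x 0), mul_self_nonneg (x 1)]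
  funext i
  fin_cases i
  · exact h0
  · exact h1

/-- In dimension `m = 2`, the Clifford-Fourier kernel
`K_-(x,y) = B_0(w,z) + (x∧y) C_0(w,z)`, with
`B_0(w,z) = J_0(z) + 2 Σ_{k≥1} J_{2k}(z) cos(2kθ)` and
`C_0(w,z) = (2/z) Σ_{k≥1} J_{2k-1}(z) sin((2k-1)θ)/sin θ`
(`w = cos θ = ⟨x,y⟩/(|x||y|)`, `z = |x||y|`), equals
`cos t + (x∧y) (sin t)/t` with `t = |x∧y| = √(|x|²|y|² - ⟨x,y⟩²)`, or equivalently
`cos(x₁y₂ - x₂y₁) + e₁e₂ sin(x₁y₂ - x₂y₁)`. -/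
theorem kernel_dim_two (x y : Fin 2 → ℝ) (hx : x ≠ 0) (hy : y ≠ 0)
    (θ z t : ℝ)
    (hθ : θ = Real.arccos (ip x y / (nrm x * nrm y)))
    (hz : z = nrm x * nrm y)
    (ht : t = Real.sqrt (ip x x * ip y y - ip x y ^ 2)) :
    (besselJ 0 z + 2 * ∑' k : ℕ, besselJ (2*(k:ℝ) + 2) z * Real.cos ((2*(k:ℝ) + 2) * θ))
        • (1 : Cl 2)
      + ((2/z) * ∑' k : ℕ, besselJ (2*(k:ℝ) + 1) z
          * (Real.sin ((2*(k:ℝ) + 1) * θ) / Real.sin θ)) • wedge 2 x y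
      = Real.cos t • (1 : Cl 2) + (Real.sin t / t) • wedge 2 x y ∧
    (besselJ 0 z + 2 * ∑' k : ℕ, besselJ (2*(k:ℝ) + 2) z * Real.cos ((2*(k:ℝ) + 2) * θ))
        • (1 : Cl 2)
      + ((2/z) * ∑' k : ℕ, besselJ (2*(k:ℝ) + 1) z
          * (Real.sin ((2*(k:ℝ) + 1) * θ) / Real.sin θ)) • wedge 2 x y
      = Real.cos (x 0 * y 1 - x 1 * y 0) • (1 : Cl 2)
        + Real.sin (x 0 * y 1 - x 1 * y 0) • (e 2 0 * e 2 1) := by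
  rw [aux_wedge, aux_smul, aux_smul, aux_B]
  have hX := aux_ip_pos x hx
  have hY := aux_ip_pos y hy
  have hzp : 0 < z := by
    rw [hz]; exact mul_pos (Real.sqrt_pos.mpr hX) (Real.sqrt_pos.mpr hY)
  have hz2 : z ^ 2 = ip x x * ip y y := by
    rw [hz, mul_pow, nrm, nrm, Real.sq_sqrt hX.le, Real.sq_sqrt hY.le]
  have hd : ip x x * ip y y - ip x y ^ 2 = (x 0 * y 1 - x 1 * y 0) ^ 2 := by
    simp only [ip, Fin.sum_univ_two]; ring
  have hzs : z * Real.sin θ = t := by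
    rw [hθ, ← hz, Real.sin_arccos, ht]
    rw [← Real.sqrt_sq hzp.le, ← Real.sqrt_mul (sq_nonneg _), Real.sqrt_sq hzp.le, mul_sub,
      mul_one, div_pow, mul_div_cancel₀ _ (by positivity), hz2]
  rw [hd, Real.sqrt_sq_eq_abs] at ht
  set d := x 0 * y 1 - x 1 * y 0 with hdd
  have hcos : Real.cos t = Real.cos d := by rw [ht, Real.cos_abs]
  have hsin : Real.sin t / t * d = Real.sin d := by
    by_cases h0 : d = 0
    · simp [h0]
    · rw [ht]
      rcases abs_choice d with h | h <;> rw [h]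
      · field_simp
      · rw [Real.sin_neg]; field_simp
  have hC : (2/z) * (∑' k : ℕ, besselJ (2*(k:ℝ) + 1) z
          * (Real.sin ((2*(k:ℝ) + 1) * θ) / Real.sin θ)) * d = Real.sin d := by
    rw [← hsin]
    congr 1
    simp only [← mul_div_assoc]
    rw [tsum_div_const, div_mul_div_comm, aux_C, hzs]
  rw [hC, hsin, hzs, hcos]
  exact ⟨rfl, rfl⟩

end CliffordFourier
end
end

section
/- Let m > 2 be even and λ = (m−2)/2. For x, y ∈ ℝ^m∖{0} set s = ⟨x,y⟩ and t = |x∧y| = √(|x|²|y|² − s²). Then the Clifford–Fourier kernel (defined by the Gegenbauer–Bessel series) satisfies K_−(x,y) = (−1)^{m/2} (π/2)^{1/2} ( A*_{(m−2)/2}(s,t) + B*_{(m−2)/2}(s,t) + (x∧y) C*_{(m−2)/2}(s,t) ), where, with J̃_α(t) = t^{−α} J_α(t): A*_{(m−2)/2}(s,t) = Σ_{ℓ=0}^{⌊m/4 − 3/4⌋} s^{m/2−2−2ℓ} (1/(2^ℓ ℓ!)) (Γ(m/2)/Γ(m/2−2ℓ−1)) J̃_{(m−2ℓ−3)/2}(t);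 B*_{(m−2)/2}(s,t) = −Σ_{ℓ=0}^{⌊m/4 − 1/2⌋} s^{m/2−1−2ℓ} (1/(2^ℓ ℓ!)) (Γ(m/2)/Γ(m/2−2ℓ)) J̃_{(m−2ℓ−3)/2}(t); C*_{(m−2)/2}(s,t) = −Σ_{ℓ=0}^{⌊m/4 − 1/2⌋} s^{m/2−1−2ℓ} (1/(2^ℓ ℓ!)) (Γ(m/2)/Γ(m/2−2ℓ)) J̃_{(m−2ℓ−1)/2}(t). -/
open scoped BigOperators
open MeasureTheory

noncomputable section

namespace CliffordFourier

variable {m : ℕ}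

/-- `A_λ(w,z) = 2^{λ-1} Γ(λ+1) Σ_{k≥0} (u + (-1)^k) z^{-λ} J_{k+λ}(z) C_k^λ(w)`,
where `u` stands for `i^m`. -/
def AfunU (u : ℂ) (lam w z : ℝ) : ℂ :=
  (((2:ℝ)^(lam - 1) * Real.Gamma (lam + 1) : ℝ) : ℂ) *
    ∑' k : ℕ, (u + (-1 : ℂ)^k) * ((z ^ (-lam) * besselJ ((k : ℝ) + lam) z * geg lam k w : ℝ) : ℂ)

/-- `B_λ(w,z) = -2^{λ-1} Γ(λ) Σ_{k≥0} (k+λ)(u - (-1)^k) z^{-λ} J_{k+λ}(z) C_k^λ(w)`. -/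
def BfunU (u : ℂ) (lam w z : ℝ) : ℂ :=
  -(((2:ℝ)^(lam - 1) * Real.Gamma lam : ℝ) : ℂ) *
    ∑' k : ℕ, ((k : ℂ) + (lam : ℂ)) * (u - (-1 : ℂ)^k) *
      ((z ^ (-lam) * besselJ ((k : ℝ) + lam) z * geg lam k w : ℝ) : ℂ)

/-- `C_λ(w,z) = -2^{λ-1} Γ(λ) Σ_{k≥0} (u + (-1)^k) z^{-λ-1} J_{k+λ}(z) (C_k^λ)'(w)`. -/
def CfunU (u : ℂ) (lam w z : ℝ) : ℂ :=
  -(((2:ℝ)^(lam - 1) * Real.Gamma lam : ℝ) : ℂ) *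
    ∑' k : ℕ, (u + (-1 : ℂ)^k) *
      ((z ^ (-lam - 1) * besselJ ((k : ℝ) + lam) z * deriv (geg lam k) w : ℝ) : ℂ)

/-- The Clifford-Fourier kernel
`K_-(x,y) = A_λ(w,z) + B_λ(w,z) + (x∧y) C_λ(w,z)`
with `λ = (m-2)/2`, `z = |x||y|`, `w = ⟨x,y⟩/(|x||y|)`. -/
def Kminus (m : ℕ) (x y : Fin m → ℝ) : Cl m :=
  (AfunU (Complex.I ^ m) (((m:ℝ) - 2)/2) (ip x y / (nrm x * nrm y)) (nrm x * nrm y)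
    + BfunU (Complex.I ^ m) (((m:ℝ) - 2)/2) (ip x y / (nrm x * nrm y)) (nrm x * nrm y)) • (1 : Cl m)
  + CfunU (Complex.I ^ m) (((m:ℝ) - 2)/2) (ip x y / (nrm x * nrm y)) (nrm x * nrm y) • wedge m x y

/-- The entire function `J̃_a(t) = t^{-a} J_a(t) = Σ_{j≥0} (-1)^j (t/2)^{2j} / (j! Γ(j+a+1) 2^a)`
(for `t > 0` this is literally `t^{-a} J_a(t)`). -/
def besselJt (a t : ℝ) : ℝ :=
  ∑' j : ℕ, ((-1 : ℝ)^j * (t/2) ^ (2*j)) / (j.factorial * Real.Gamma ((j : ℝ) + a + 1) * (2:ℝ)^a)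

/-- `A*_{(m-2)/2}(s,t) = Σ_{ℓ=0}^{⌊m/4-3/4⌋} s^{m/2-2-2ℓ} (1/(2^ℓ ℓ!)) Γ(m/2)/Γ(m/2-2ℓ-1) J̃_{(m-2ℓ-3)/2}(t)`. -/
def Astar (m : ℕ) (s t : ℝ) : ℝ :=
  ∑ l ∈ Finset.range ((m - 3)/4 + 1),
    s ^ (m/2 - 2 - 2*l) * (1 / ((2:ℝ)^l * (l.factorial : ℝ))) *
      (Real.Gamma ((m:ℝ)/2) / Real.Gamma ((m:ℝ)/2 - 2*l - 1)) *
        besselJt (((m:ℝ) - 2*l - 3)/2) t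

/-- `B*_{(m-2)/2}(s,t) = -Σ_{ℓ=0}^{⌊m/4-1/2⌋} s^{m/2-1-2ℓ} (1/(2^ℓ ℓ!)) Γ(m/2)/Γ(m/2-2ℓ) J̃_{(m-2ℓ-3)/2}(t)`. -/
def Bstar (m : ℕ) (s t : ℝ) : ℝ :=
  -∑ l ∈ Finset.range ((m - 2)/4 + 1),
    s ^ (m/2 - 1 - 2*l) * (1 / ((2:ℝ)^l * (l.factorial : ℝ))) *
      (Real.Gamma ((m:ℝ)/2) / Real.Gamma ((m:ℝ)/2 - 2*l)) *
        besselJt (((m:ℝ) - 2*l - 3)/2) t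

/-- `C*_{(m-2)/2}(s,t) = -Σ_{ℓ=0}^{⌊m/4-1/2⌋} s^{m/2-1-2ℓ} (1/(2^ℓ ℓ!)) Γ(m/2)/Γ(m/2-2ℓ) J̃_{(m-2ℓ-1)/2}(t)`. -/
def Cstar (m : ℕ) (s t : ℝ) : ℝ :=
  -∑ l ∈ Finset.range ((m - 2)/4 + 1),
    s ^ (m/2 - 1 - 2*l) * (1 / ((2:ℝ)^l * (l.factorial : ℝ))) *
      (Real.Gamma ((m:ℝ)/2) / Real.Gamma ((m:ℝ)/2 - 2*l)) *
        besselJt (((m:ℝ) - 2*l - 1)/2) t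

/-! auxiliary lemmas -/

lemma geg_PQ (lam w : ℝ) (k : ℕ) :
    (((k:ℝ)+2) * geg lam (k+2) w = 2*lam*(w * geg (lam+1) (k+1) w - geg (lam+1) k w)) ∧
    (((k:ℝ)+2+2*lam) * geg lam (k+2) w = 2*lam*(geg (lam+1) (k+2) w - w * geg (lam+1) (k+1) w)) := by
  have key : ∀ k : ℕ, (((k:ℝ)+2) * geg lam (k+2) w = 2*lam*(w * geg (lam+1) (k+1) w - geg (lam+1) k w)) →
    (((k:ℝ)+2+2*lam) * geg lam (k+2) w = 2*lam*(geg (lam+1) (k+2) w - w * geg (lam+1) (k+1) w)) := by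
    intro k h
    have hk : ((k:ℝ)+2) ≠ 0 := by positivity
    have hr : ((k:ℝ)+2) * geg (lam+1) (k+2) w = 2 * ((k : ℝ) + 1 + (lam+1)) * w * geg (lam+1) (k+1) w
      - ((k : ℝ) + 2 * (lam+1)) * geg (lam+1) k w := by
      rw [geg]; field_simp
    apply mul_left_cancel₀ hk
    linear_combination ((k:ℝ)+2+2*lam) * h - 2*lam*hr
  have step : ∀ k : ℕ, ((k:ℝ)+2) * geg lam (k+2) w = 2 * ((k : ℝ) + 1 + lam) * w * geg lam (k+1) w
      - ((k : ℝ) + 2 * lam) * geg lam k w := by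
      intro k
      rw [geg]; field_simp
  induction k using Nat.strong_induction_on with
  | _ k ih =>
    refine (fun h => ⟨h, key k h⟩) ?_
    match k, ih with
    | 0, _ =>
      have := step 0
      simp only [geg] at this ⊢
      simp at this ⊢
      ring
    | 1, ih =>
      have h0 := ih 0 (by norm_num)
      have := step 1
      have e1 : geg lam 1 w = 2*lam*w := by simp [geg]
      have e2 : geg (lam+1) 1 w = 2*(lam+1)*w := by simp [geg]
      have e3 : geg (lam+1) 0 w = 1 := by simp [geg]
      simp only [Nat.cast_zero, Nat.cast_one, zero_add, Nat.reduceAdd, e1, e2, e3] at h0 this ⊢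
      obtain ⟨h1, h2⟩ := h0
      linear_combination this + w * h1 + w * h2
    | k+2, ih =>
      have h1 := ih (k+1) (by omega)
      have h0 := ih k (by omega)
      have := step (k+2)
      push_cast at h1 h0 this ⊢
      linear_combination this + w * h1.1 + w * h1.2 - h0.2

lemma geg_hasDeriv (lam w : ℝ) (k : ℕ) :
    HasDerivAt (geg lam 0) 0 w ∧ HasDerivAt (geg lam (k+1)) (2*lam*geg (lam+1) k w) w := by
  have h0 : HasDerivAt (geg lam 0) 0 w := by
    have : geg lam 0 = fun _ => 1 := by funext w; simp [geg]
    rw [this]; exact hasDerivAt_const _ _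
  refine ⟨h0, ?_⟩
  have hstep : ∀ (k : ℕ) (d1 d0 : ℝ), HasDerivAt (geg lam (k+1)) d1 w → HasDerivAt (geg lam k) d0 w →
     HasDerivAt (geg lam (k+2)) ((2 * ((k : ℝ) + 1 + lam) * (geg lam (k+1) w + w * d1)
      - ((k : ℝ) + 2 * lam) * d0) / ((k : ℝ) + 2)) w := by
    intro k d1 d0 h1 h0
    have : geg lam (k+2) = fun w => (2 * ((k : ℝ) + 1 + lam) * (w * geg lam (k+1) w)
      - ((k : ℝ) + 2 * lam) * geg lam k w) / ((k : ℝ) + 2) := by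
      funext w; rw [geg]; ring
    rw [this]
    refine ((((hasDerivAt_id w).fun_mul h1).const_mul (2 * ((k : ℝ) + 1 + lam))).fun_sub
      (h0.const_mul ((k : ℝ) + 2 * lam))).div_const ((k:ℝ)+2) |>.congr_deriv ?_
    simp
  have e1 : HasDerivAt (geg lam 1) (2*lam*geg (lam+1) 0 w) w := by
    have : geg lam 1 = fun w => 2*lam*w := by funext w; simp [geg]
    rw [this]
    simpa [geg] using (hasDerivAt_id w).const_mul (2*lam)
  induction k using Nat.strong_induction_on with
  | _ k ih =>
    match k, ih with
    | 0, _ => exact e1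
    | 1, _ =>
      convert hstep 0 _ _ e1 h0 using 1
      simp [geg]; ring
    | k+2, ih =>
      have a1 := ih (k+1) (by omega)
      have a0 := ih k (by omega)
      convert hstep (k+1) _ _ a1 a0 using 1
      have hPQ := geg_PQ lam w k
      have hr : ((k:ℝ)+2) * geg (lam+1) (k+2) w = 2 * ((k : ℝ) + 1 + (lam+1)) * w * geg (lam+1) (k+1) w
        - ((k : ℝ) + 2 * (lam+1)) * geg (lam+1) k w := by
        rw [geg]; field_simp
      have hk : ((k:ℝ)+1+2) ≠ 0 := by positivity
      push_cast
      rw [eq_div_iff hk]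
      have e : k + 1 + 1 = k+2 := rfl
      rw [e]
      linear_combination 2*lam*hr - hPQ.1 - hPQ.2

lemma geg_bound (lam rho : ℝ) (hl : 0 ≤ lam) (hr : 0 ≤ rho) (w : ℝ) (hw : |w| ≤ rho) (k : ℕ) :
    |geg lam k w| ≤ ((1+lam)*(2*rho+1))^k := by
  have hQ : 1 ≤ (1+lam)*(2*rho+1) := by nlinarith [mul_nonneg hl hr]
  set Q := (1+lam)*(2*rho+1) with hQd
  induction k using Nat.strong_induction_on with
  | _ k ih =>
    match k, ih with
    | 0, _ => simp [geg]
    | 1, _ =>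
      simp only [geg, abs_mul, abs_of_nonneg hl, pow_one, abs_two]
      nlinarith [mul_nonneg hl hr, mul_le_mul_of_nonneg_left hw hl]
    | k+2, ih =>
      have a1 := ih (k+1) (by omega)
      have a0 := ih k (by omega)
      have hk : (0:ℝ) < (k:ℝ)+2 := by positivity
      have hk0 : (0:ℝ) ≤ (k:ℝ) := by positivity
      rw [geg, abs_div, abs_of_pos hk, div_le_iff₀ hk]
      refine (abs_sub _ _).trans ?_
      simp only [abs_mul, abs_two]
      rw [abs_of_nonneg (show (0:ℝ) ≤ (k:ℝ)+1+lam by positivity),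
        abs_of_nonneg (show (0:ℝ) ≤ (k:ℝ)+2*lam by positivity)]
      have hQk : 0 ≤ Q^k := by positivity
      have b1 : 2*((k:ℝ)+1+lam) * |w| * |geg lam (k+1) w| ≤ (2*((1+lam)*(k+2))) * rho * Q^(k+1) := by
        gcongr
        nlinarith [mul_nonneg hl hk0]
      have b0 : ((k:ℝ)+2*lam) * |geg lam k w| ≤ ((1+lam)*(k+2)) * Q^(k+1) := by
        have : Q^k ≤ Q^(k+1) := pow_le_pow_right₀ hQ (by omega)
        have a2 := a0.trans this
        gcongr
        nlinarith [mul_nonneg hl hk0]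
      have : Q^(k+2) * ((k:ℝ)+2) = (2*((1+lam)*(k+2))) * rho * Q^(k+1) + ((1+lam)*(k+2)) * Q^(k+1) := by
        rw [pow_succ Q (k+1), hQd]; ring
      linarith

/-- factorial type growth -/
def Bd (a : ℕ → ℝ) : Prop := ∃ M R : ℝ, 0 ≤ M ∧ 0 ≤ R ∧ ∀ k, |a k| ≤ M * (R^k / k.factorial)

lemma Bd.shift {a : ℕ → ℝ} (h : Bd a) : Bd (fun k => a (k+1)) := by
  obtain ⟨M, R, hM, hR, h⟩ := h
  refine ⟨M*R, R, by positivity, hR, fun k => (h (k+1)).trans ?_⟩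
  rw [mul_assoc]
  gcongr
  rw [pow_succ', mul_div_assoc]
  gcongr
  omega

lemma Bd.shiftN {a : ℕ → ℝ} (h : Bd a) (N : ℕ) : Bd (fun k => a (k+N)) := by
  induction N with
  | zero => simpa using h
  | succ N ih => 
    have := ih.shift
    have e : (fun k => a (k+(N+1))) = fun k => a (k+1+N) := by
      funext k; congr 1; omega
    rw [e]; exact this

lemma Bd.summable_geg {a : ℕ → ℝ} (h : Bd a) (lam : ℝ) (hl : 0 ≤ lam) (w : ℝ) :
    Summable (fun k => a k * geg lam k w) := by
  obtain ⟨M, R, hM, hR, h⟩ := h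
  set Q := (1+lam)*(2*|w|+1)
  refine Summable.of_norm_bounded (g := fun k => M * ((R*Q)^k / k.factorial))
    ((Real.summable_pow_div_factorial _).mul_left _) fun k => ?_
  rw [Real.norm_eq_abs, abs_mul, mul_pow, mul_div_right_comm, ← mul_assoc]
  exact mul_le_mul (h k) (geg_bound lam |w| hl (abs_nonneg _) w le_rfl k) (abs_nonneg _) (by positivity)

lemma Bd.hasDeriv {a : ℕ → ℝ} (h : Bd a) (lam : ℝ) (hl : 0 ≤ lam) (w : ℝ) :
    HasDerivAt (fun w => ∑' k, a k * geg lam k w)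
      (2 * lam * ∑' k, a (k+1) * geg (lam+1) k w) w := by
  have hs := h.summable_geg lam hl w
  have hsh := h.shift.summable_geg (lam+1) (by linarith) w
  obtain ⟨M, R, hM, hR, h⟩ := h
  set rho := |w|+1 with hrho
  have hrp : 0 ≤ rho := by positivity
  set Q := (1+(lam+1))*(2*rho+1) with hQd
  have hQ : 1 ≤ Q := by nlinarith [mul_nonneg hl hrp]
  have hQ0 : 0 ≤ Q := by linarith
  set g' : ℕ → ℝ → ℝ := fun k w => a k * (match k with | 0 => 0 | k+1 => 2*lam*geg (lam+1) k w) with hg'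
  have hd : ∀ k y, HasDerivAt (fun w => a k * geg lam k w) (g' k y) y := by
    intro k y
    refine HasDerivAt.const_mul _ ?_
    cases k with
    | zero => exact (geg_hasDeriv lam y 0).1
    | succ k => exact (geg_hasDeriv lam y k).2
  have hb : ∀ k y, y ∈ Metric.ball (0:ℝ) rho → ‖g' k y‖ ≤ (M * (2*lam)) * ((R*Q)^k / k.factorial) := by
    intro k y hy
    have hy' : |y| ≤ rho := by simpa using (mem_ball_zero_iff.1 hy).le
    cases k with
    | zero => simp [hg']; positivity
    | succ k =>
      have hgb := geg_bound (lam+1) rho (by linarith) hrp y hy' k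
      have hgb2 : |geg (lam+1) k y| ≤ Q^(k+1) := hgb.trans (pow_le_pow_right₀ hQ (by omega))
      simp only [hg', Real.norm_eq_abs, abs_mul, abs_two, abs_of_nonneg hl]
      calc |a (k+1)| * (2*lam*|geg (lam+1) k y|) ≤ (M * (R^(k+1)/(k+1).factorial)) * (2*lam*Q^(k+1)) := by
            gcongr
            exact h (k+1)
        _ = (M * (2*lam)) * ((R*Q)^(k+1) / (k+1).factorial) := by rw [mul_pow R Q]; ring
  have hmem : w ∈ Metric.ball (0:ℝ) rho := by simp [hrho]
  have := hasDerivAt_tsum_of_isPreconnected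
    (((Real.summable_pow_div_factorial (R*Q))).mul_left (M * (2*lam)))
    Metric.isOpen_ball (convex_ball (0:ℝ) rho).isPreconnected (fun k y _ => hd k y) hb hmem hs hmem
  refine this.congr_deriv ?_
  have hsum : HasSum (fun k => g' (k+1) w) (2 * lam * ∑' k, a (k+1) * geg (lam+1) k w) := by
    have := hsh.hasSum.mul_left (2*lam)
    have e : (fun k => g' (k+1) w) = fun k => 2*lam*(a (k+1) * geg (lam+1) k w) := by
      funext k; simp only [hg']; ring
    rw [e]; exact this
  have h2 := (hasSum_nat_add_iff (f := fun k => g' k w) 1).1 hsum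
  rw [h2.tsum_eq]
  simp [hg']

lemma iter_geg {a : ℕ → ℝ} (ha : Bd a) (G : ℕ → ℝ → ℝ)
    (hG : ∀ N w, HasDerivAt (G N) (G (N+1) w) w)
    (h0 : ∀ w ∈ Set.Ioo (-1:ℝ) 1, ∑' k, a k * geg 1 k w = G 0 w) (N : ℕ) :
    ∀ w ∈ Set.Icc (-1:ℝ) 1,
      (2:ℝ)^N * N.factorial * ∑' k, a (k+N) * geg ((N:ℝ)+1) k w = G N w := by
  have hder : ∀ (N : ℕ) (w : ℝ), HasDerivAt (fun w => (2:ℝ)^N * N.factorial * ∑' k, a (k+N) * geg ((N:ℝ)+1) k w)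
    ((2:ℝ)^(N+1) * (N+1).factorial * ∑' k, a (k+(N+1)) * geg (((N+1:ℕ):ℝ)+1) k w) w := by
    intro N w
    refine (((ha.shiftN N).hasDeriv ((N:ℝ)+1) (by positivity) w).const_mul
      ((2:ℝ)^N * N.factorial)).congr_deriv ?_
    have : ∀ k, a (k+1+N) = a (k+(N+1)) := fun k => by congr 1; omega
    simp only [this]
    rw [Nat.factorial_succ]; push_cast; ring
  have hI : ∀ N, ∀ w ∈ Set.Ioo (-1:ℝ) 1,
      (2:ℝ)^N * N.factorial * ∑' k, a (k+N) * geg ((N:ℝ)+1) k w = G N w := by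
    intro N
    induction N with
    | zero => simpa using h0
    | succ N ih =>
      intro w hw
      have h1 := hder N w
      have h2 := hG N w
      refine h1.unique (h2.congr_of_eventuallyEq ?_)
      filter_upwards [isOpen_Ioo.mem_nhds hw] with v hv using ih v hv
  have hc : closure (Set.Ioo (-1:ℝ) 1) = Set.Icc (-1:ℝ) 1 := closure_Ioo (by norm_num)
  have := Set.EqOn.closure (f := fun w => (2:ℝ)^N * N.factorial * ∑' k, a (k+N) * geg ((N:ℝ)+1) k w)
    (g := G N) (s := Set.Ioo (-1:ℝ) 1) (hI N)
    (continuous_iff_continuousAt.2 fun w => (hder N w).continuousAt)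
    (continuous_iff_continuousAt.2 fun w => (hG N w).continuousAt)
  rw [hc] at this
  exact this

lemma gamma_lower (a : ℝ) (ha : -1 < a) : ∃ c : ℝ, 0 < c ∧ ∀ j : ℕ, c ≤ Real.Gamma ((j:ℝ)+a+1) := by
  refine ⟨min (Real.Gamma (a+1)) (Real.Gamma (a+2)), ?_, ?_⟩
  · exact lt_min (Real.Gamma_pos_of_pos (by linarith)) (Real.Gamma_pos_of_pos (by linarith))
  · have h : ∀ j : ℕ, Real.Gamma (a+2) ≤ Real.Gamma ((j:ℝ)+1+a+1) := by
      intro j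
      induction j with
      | zero => simp only [Nat.cast_zero]; apply le_of_eq; congr 1; ring
      | succ j ih =>
        refine ih.trans ?_
        have hj : (0:ℝ) ≤ j := by positivity
        have e : (((j+1:ℕ):ℝ)+1+a+1) = ((j:ℝ)+1+a+1) + 1 := by push_cast; ring
        rw [e, Real.Gamma_add_one (s := (j:ℝ)+1+a+1) (by linarith)]
        have : 0 < Real.Gamma ((j:ℝ)+1+a+1) := Real.Gamma_pos_of_pos (by linarith)
        nlinarith
    intro j
    cases j with
    | zero => simp
    | succ j => push_cast; exact (min_le_right _ _).trans (h j)

/-- entire version of the normalized Bessel function in the variable t^2 -/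
def HH (a r : ℝ) : ℝ :=
  ∑' j : ℕ, ((-1 : ℝ)^j * (r/4) ^ j) / (j.factorial * Real.Gamma ((j : ℝ) + a + 1) * (2:ℝ)^a)

lemma besselJt_eq (a t : ℝ) : besselJt a t = HH a (t^2) := by
  unfold besselJt HH
  congr 1; funext j
  rw [pow_mul]; congr 4; ring

lemma HH_hasDeriv (a r : ℝ) (ha : -1 < a) : HasDerivAt (HH a) (-(1/2) * HH (a+1) r) r := by
  obtain ⟨c, hc, hcj⟩ := gamma_lower a ha
  set P := (2:ℝ)^a with hP
  have hPp : 0 < P := by positivity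
  set f : ℕ → ℝ → ℝ := fun j r => ((-1 : ℝ)^j * (r/4) ^ j) / (j.factorial * Real.Gamma ((j : ℝ) + a + 1) * P) with hf
  set f' : ℕ → ℝ → ℝ := fun j r => ((-1 : ℝ)^j * (j * (r/4) ^ (j-1) * (1/4))) / (j.factorial * Real.Gamma ((j : ℝ) + a + 1) * P) with hf'
  have hd : ∀ j y, HasDerivAt (f j) (f' j y) y := by
    intro j y
    refine HasDerivAt.div_const (HasDerivAt.const_mul _ ?_) _
    exact ((hasDerivAt_id y).div_const 4).pow j
  set rho := |r| + 1 with hrho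
  have hden : ∀ j : ℕ, (j.factorial:ℝ) * (c * P) ≤ j.factorial * Real.Gamma ((j : ℝ) + a + 1) * P := by
    intro j; rw [mul_assoc]; gcongr; exact hcj j
  have hfs : Summable (fun j => f j r) := by
    refine Summable.of_norm_bounded (g := fun j => (1/(c*P)) * (|r/4|^j / j.factorial))
      ((Real.summable_pow_div_factorial _).mul_left _) fun j => ?_
    have hj : (0:ℝ) < j.factorial := by positivity
    have h0 : 0 < (j.factorial:ℝ) * (c * P) := by positivity
    simp only [hf, Real.norm_eq_abs, abs_div, abs_mul, abs_pow, abs_neg, abs_one, one_pow, one_mul]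
    have h1 : (j.factorial:ℝ) * (c * P) ≤ |(j.factorial:ℝ)| * |Real.Gamma ((j : ℝ) + a + 1)| * |P| := by
      rw [← abs_mul, ← abs_mul]; exact (hden j).trans (le_abs_self _)
    rw [← abs_div]
    calc |r/4|^j / _ ≤ |r/4|^j / ((j.factorial:ℝ) * (c * P)) := by gcongr
      _ = _ := by field_simp
  have hb : ∀ j y, y ∈ Metric.ball (0:ℝ) rho → ‖f' j y‖ ≤ (1/(c*P)) * ((2*(rho+1))^j / j.factorial) := by
    intro j y hy
    have hy' : |y| ≤ rho := by simpa using (mem_ball_zero_iff.1 hy).le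
    have hrp : 0 ≤ rho := by positivity
    have h0 : 0 < (j.factorial:ℝ) * (c * P) := by positivity
    have h1 : (j.factorial:ℝ) * (c * P) ≤ |(j.factorial:ℝ) * Real.Gamma ((j : ℝ) + a + 1) * P| := 
      (hden j).trans (le_abs_self _)
    have hnum : |(-1 : ℝ)^j * (j * (y/4) ^ (j-1) * (1/4))| ≤ (2*(rho+1))^j := by
      rw [abs_mul, abs_mul, abs_mul, abs_pow, abs_pow, abs_neg, abs_one, one_pow, one_mul, mul_pow,
        Nat.abs_cast]
      have e1 : (j:ℝ) ≤ 2^j := by exact_mod_cast (Nat.lt_two_pow_self (n := j)).le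
      have e2 : |y/4|^(j-1) ≤ (rho+1)^j := by
        have : |y/4| ≤ rho+1 := by rw [abs_div]; norm_num; linarith
        calc |y/4|^(j-1) ≤ (rho+1)^(j-1) := by gcongr
          _ ≤ _ := pow_le_pow_right₀ (by linarith) (by omega)
      calc (j:ℝ) * |y/4|^(j-1) * |(1/4:ℝ)| ≤ 2^j * (rho+1)^j * 1 := by
            gcongr
            rw [abs_of_pos] <;> norm_num
        _ = _ := by ring
    simp only [hf', Real.norm_eq_abs]
    rw [abs_div]
    calc _ ≤ (2*(rho+1))^j / ((j.factorial:ℝ) * (c * P)) := by gcongr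
      _ = _ := by field_simp
  have hmem : r ∈ Metric.ball (0:ℝ) rho := by simp [hrho]
  have := hasDerivAt_tsum_of_isPreconnected
    (((Real.summable_pow_div_factorial (2*(rho+1)))).mul_left (1/(c*P)))
    Metric.isOpen_ball (convex_ball (0:ℝ) rho).isPreconnected (fun k y _ => hd k y) hb hmem hfs hmem
  refine this.congr_deriv ?_
  have hs' : Summable (fun j => f' j r) := Summable.of_norm_bounded
    ((Real.summable_pow_div_factorial (2*(rho+1))).mul_left (1/(c*P))) (fun j => hb j r hmem)
  rw [hs'.tsum_eq_zero_add]
  have z0 : f' 0 r = 0 := by simp [hf']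
  rw [z0, zero_add, HH, ← tsum_mul_left]
  congr 1; funext j
  simp only [hf']
  rw [Real.rpow_add_one (by norm_num), ← hP]
  have e : (((j+1:ℕ):ℝ) + a + 1) = (j:ℝ) + (a+1) + 1 := by push_cast; ring
  rw [e, Nat.factorial_succ]
  have hg : Real.Gamma ((j:ℝ) + (a+1) + 1) ≠ 0 := by
    rw [← e]; exact (hc.trans_le (hcj (j+1))).ne'
  have hj : (j.factorial:ℝ) ≠ 0 := by positivity
  have hj1 : ((j:ℝ)+1) ≠ 0 := by positivity
  push_cast
  field_simp
  ring

/-- coefficients -/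
def cc (N l : ℕ) : ℝ := if 2*l ≤ N then (N.factorial : ℝ) / (2^l * l.factorial * (N-2*l).factorial) else 0

lemma cc_zero (N : ℕ) : cc N 0 = 1 := by
  have : (N.factorial:ℝ) ≠ 0 := by positivity
  simp [cc, this]

lemma cc_succ (N l : ℕ) : cc (N+1) (l+1) = cc N (l+1) + ((N-2*l : ℕ):ℝ) * cc N l := by
  unfold cc
  by_cases h1 : 2*(l+1) ≤ N
  · obtain ⟨d, rfl⟩ := Nat.exists_eq_add_of_le h1
    rw [if_pos (by omega), if_pos h1, if_pos (by omega)]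
    have e1 : 2*(l+1)+d+1 - 2*(l+1) = d+1 := by omega
    have e2 : 2*(l+1)+d - 2*(l+1) = d := by omega
    have e3 : 2*(l+1)+d - 2*l = d+2 := by omega
    rw [e1, e2, e3]
    simp only [Nat.factorial_succ]
    push_cast
    field_simp
    ring
  · by_cases h2 : 2*l+1 = N
    · subst h2
      rw [if_pos (by omega), if_neg h1, if_pos (by omega)]
      have e1 : 2*l+1+1 - 2*(l+1) = 0 := by omega
      have e3 : 2*l+1 - 2*l = 1 := by omega
      rw [e1, e3]
      simp only [Nat.factorial_succ, Nat.factorial_zero]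
      push_cast
      field_simp
      ring
    · rw [if_neg (by omega), if_neg h1]
      have : N - 2*l = 0 := by omega
      rw [this]; simp

/-- the iterated derivative -/
def TT (a z : ℝ) (N : ℕ) (s : ℝ) : ℝ :=
  ∑ l ∈ Finset.range (N+1), cc N l * (s^(N-2*l) * HH (a+N-l) (z^2-s^2))

lemma TT_hasDeriv (a z : ℝ) (N : ℕ) (s : ℝ) (ha : ∀ l : ℕ, 2*l ≤ N → -1 < a+N-l) :
    HasDerivAt (TT a z N) (TT a z (N+1) s) s := by
  have h1 : HasDerivAt (TT a z N) (∑ l ∈ Finset.range (N+1), cc N l * (((N-2*l:ℕ):ℝ) * s^(N-2*l-1) * HH (a+N-l) (z^2-s^2)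
     + s^(N+1-2*l) * HH (a+(N+1:ℕ)-l) (z^2-s^2))) s := by
    unfold TT
    refine HasDerivAt.fun_sum fun l _ => ?_
    by_cases hl : 2*l ≤ N
    · refine HasDerivAt.const_mul _ ?_
      have hq : HasDerivAt (fun s : ℝ => z^2-s^2) (-(2*s)) s := by
        simpa using (hasDerivAt_pow 2 s).const_sub (z^2)
      have hH := (HH_hasDeriv (a+N-l) (z^2-s^2) (ha l hl)).comp s hq
      refine ((hasDerivAt_pow (N-2*l) s).fun_mul hH).congr_deriv ?_
      have e : N+1-2*l = (N-2*l)+1 := by omega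
      have e2 : a+(N:ℝ)-l+1 = a+((N+1:ℕ):ℝ)-l := by push_cast; ring
      rw [e, e2, pow_succ]
      simp only [Function.comp]
      ring
    · have : cc N l = 0 := by simp [cc, hl]
      simp only [this, zero_mul]
      exact hasDerivAt_const _ _
  refine h1.congr_deriv ?_
  unfold TT
  rw [Finset.sum_range_succ' _ (N+1)]
  simp only [cc_succ, add_mul, Finset.sum_add_distrib, mul_add]
  have A1 : ∑ l ∈ Finset.range (N+1), cc N l * (s^(N+1-2*l) * HH (a+(N+1:ℕ)-l) (z^2-s^2)) =
      ∑ l ∈ Finset.range (N+1), cc N (l+1) * (s^(N+1-2*(l+1)) * HH (a+(N+1:ℕ)-(l+1:ℕ)) (z^2-s^2)) + 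
       cc (N+1) 0 * (s^(N+1-2*0) * HH (a+(N+1:ℕ)-(0:ℕ)) (z^2-s^2)) := by
    rw [cc_zero, ← cc_zero N, 
      ← Finset.sum_range_succ' (fun l => cc N l * (s^(N+1-2*l) * HH (a+(N+1:ℕ)-l) (z^2-s^2))) (N+1),
      Finset.sum_range_succ _ (N+1)]
    have : cc N (N+1) = 0 := by unfold cc; rw [if_neg (by omega)]
    rw [this]; simp
  rw [A1]
  have A2 : ∑ l ∈ Finset.range (N+1), cc N l * (((N-2*l:ℕ):ℝ) * s^(N-2*l-1) * HH (a+N-l) (z^2-s^2)) =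
     ∑ l ∈ Finset.range (N+1), ((N-2*l:ℕ):ℝ) * cc N l * (s^(N+1-2*(l+1)) * HH (a+(N+1:ℕ)-(l+1:ℕ)) (z^2-s^2)) := by
    refine Finset.sum_congr rfl fun l _ => ?_
    have e : N+1-2*(l+1) = N-2*l-1 := by omega
    have e2 : a+((N+1:ℕ):ℝ)-(l+1:ℕ) = a+N-l := by push_cast; ring
    rw [e, e2]; ring
  rw [A2]
  rw [add_comm, add_right_comm]
  simp only [Nat.mul_add]

lemma HH_half (t : ℝ) (ht : t ≠ 0) : Real.sqrt (Real.pi/2) * HH (1/2) (t^2) = Real.sin t / t := by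
  have h := (Real.hasSum_sin t).div_const t
  rw [← h.tsum_eq, HH, ← tsum_mul_left]
  congr 1; funext j
  have hg := Real.Gamma_mul_Gamma_add_half ((j:ℝ)+1)
  have e1 : Real.Gamma ((j:ℝ)+1) = j.factorial := Real.Gamma_nat_eq_factorial j
  have e2 : Real.Gamma (2*((j:ℝ)+1)) = (2*j+1).factorial := by
    rw [← Real.Gamma_nat_eq_factorial]; congr 1; push_cast; ring
  have e3 : (2:ℝ)^(1-2*((j:ℝ)+1)) = 1/2^(2*j+1) := by
    rw [one_div, ← Real.rpow_natCast, ← Real.rpow_neg (by norm_num)]; congr 1; push_cast; ring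
  have e4 : (j:ℝ)+1/2+1 = (j:ℝ)+1+1/2 := by ring
  rw [e1, e2, e3] at hg
  rw [e4, hg, ← Real.sqrt_eq_rpow, Real.sqrt_div Real.pi_pos.le]
  have hp : √Real.pi ≠ 0 := (Real.sqrt_pos.2 Real.pi_pos).ne'
  have h2 : √(2:ℝ) ≠ 0 := by positivity
  have h22 : √(2:ℝ)^2 = 2 := Real.sq_sqrt (by norm_num)
  have hf : ((2*j+1).factorial:ℝ) ≠ 0 := by positivity
  rw [div_pow, ← pow_mul]
  have e5 : (4:ℝ)^j = 2^(2*j) := by rw [pow_mul]; norm_num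
  rw [e5, pow_succ t, pow_succ (2:ℝ)]
  field_simp
  rw [h22]

/-- Bessel function of natural order -/
def Jn (p : ℕ) (z : ℝ) : ℝ :=
  ∑' j : ℕ, ((-1 : ℝ)^j * (z/2) ^ (2*j+p)) / (j.factorial * (j+p).factorial)

lemma besselJ_eq (p : ℕ) (z : ℝ) : besselJ (p:ℝ) z = Jn p z := by
  unfold besselJ Jn
  congr 1; funext j
  have e1 : (2*(j:ℝ)+p) = ((2*j+p:ℕ):ℝ) := by push_cast; ring
  have e2 : ((j:ℝ)+p+1) = ((j+p:ℕ):ℝ)+1 := by push_cast; ring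
  rw [e1, Real.rpow_natCast, e2, Real.Gamma_nat_eq_factorial]

lemma Jn_term_bound (p : ℕ) (z : ℝ) (j : ℕ) :
    ‖((-1 : ℝ)^j * (z/2) ^ (2*j+p)) / (j.factorial * (j+p).factorial)‖ ≤
      (|z/2|^p / p.factorial) * ((|z/2|^2)^j / j.factorial) := by
  rw [Real.norm_eq_abs, abs_div, abs_mul, abs_mul, abs_pow, abs_pow, abs_neg, abs_one, one_pow,
    one_mul, Nat.abs_cast, Nat.abs_cast, pow_add, pow_mul]
  have h : (p.factorial:ℝ) ≤ (j+p).factorial := by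
    exact_mod_cast Nat.factorial_le (by omega)
  calc (|z/2|^2)^j * |z/2|^p / (j.factorial * (j+p).factorial) 
      ≤ (|z/2|^2)^j * |z/2|^p / (j.factorial * p.factorial) := by gcongr
    _ = _ := by field_simp

lemma Jn_summable (p : ℕ) (z : ℝ) :
    Summable fun j : ℕ => ((-1 : ℝ)^j * (z/2) ^ (2*j+p)) / (j.factorial * (j+p).factorial) :=
  Summable.of_norm_bounded ((Real.summable_pow_div_factorial _).mul_left _) (Jn_term_bound p z)

lemma Jn_bound (z : ℝ) : ∃ M : ℝ, 0 ≤ M ∧ ∀ p, |Jn p z| ≤ M * (|z/2|^p / p.factorial) := by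
  refine ⟨∑' j : ℕ, ((|z/2|^2)^j / j.factorial), tsum_nonneg fun j => by positivity, fun p => ?_⟩
  have := tsum_of_norm_bounded ((Real.summable_pow_div_factorial (|z/2|^2)).mul_left
    (|z/2|^p / p.factorial)).hasSum (Jn_term_bound p z)
  rw [tsum_mul_left, mul_comm] at this
  exact this

lemma hasSum_shift {f : ℕ → ℝ} {S : ℝ} (h : HasSum (fun k => f (k+1)) S) (h0 : f 0 = 0) :
    HasSum f S := by
  have := (hasSum_nat_add_iff (f := f) 1).1 h
  simpa [h0] using this

lemma Jn_rec (p : ℕ) (z : ℝ) : ((p:ℝ)+1) * Jn (p+1) z = (z/2) * (Jn p z + Jn (p+2) z) := by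
  have h0 := (Jn_summable p z).hasSum
  have h1 := (Jn_summable (p+1) z).hasSum
  have h2 := (Jn_summable (p+2) z).hasSum
  set v : ℕ → ℝ := fun j => match j with
    | 0 => 0
    | j+1 => ((-1 : ℝ)^j * (z/2) ^ (2*j+(p+2))) / (j.factorial * (j+(p+2)).factorial) with hv
  have h2' : HasSum v (Jn (p+2) z) := hasSum_shift h2 rfl
  have h3 := (h0.add h2').mul_left (z/2)
  refine (h1.mul_left ((p:ℝ)+1)).unique ?_
  refine h3.congr_fun ?_
  intro j
  cases j with
  | zero =>
    simp only [hv]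
    simp [Nat.factorial_succ, pow_succ]
    field_simp
  | succ j =>
    simp only [hv]
    have e1 : j + 1 + (p+1) = (j+p+1)+1 := by ring
    have e2 : j + 1 + p = j+p+1 := by ring
    have e3 : j + (p+2) = (j+p+1)+1 := by ring
    have e4 : 2*(j+1)+(p+1) = 2*j+p+3 := by ring
    have e5 : 2*(j+1)+p = 2*j+p+2 := by ring
    have e6 : 2*j+(p+2) = 2*j+p+2 := by ring
    rw [e1, e2, e3, e4, e5, e6, Nat.factorial_succ (j+p+1), Nat.factorial_succ j]
    push_cast
    have : ((j:ℝ)+p+1+1) ≠ 0 := by positivity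
    field_simp
    ring

/-- reindexing -/
def ze : ℤ × ℕ ≃ ℕ × ℕ where
  toFun x := (x.2 + x.1.toNat, x.2 + (-x.1).toNat)
  invFun x := ((x.1:ℤ) - x.2, min x.1 x.2)
  left_inv x := by
    obtain ⟨a, b⟩ := x
    ext
    · simp only; push_cast; omega
    · simp only; omega
  right_inv x := by
    obtain ⟨a, b⟩ := x
    ext
    · simp only; omega
    · simp only; omega

lemma bessel_gen (z θ : ℝ) :
    HasSum (fun n : ℕ => Jn n z * (1 - (-1)^n) * Real.sin (n*θ)) (Real.sin (z * Real.sin θ)) := by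
  set τ : ℂ := Complex.exp (θ * Complex.I) with hτ
  set τ' : ℂ := Complex.exp (-(θ * Complex.I)) with hτ'
  have hττ : τ * τ' = 1 := by rw [hτ, hτ', ← Complex.exp_add]; simp
  set f : ℕ → ℂ := fun p => ((z/2 : ℂ)*τ)^p / p.factorial with hf
  set g : ℕ → ℂ := fun q => (-(z/2 : ℂ)*τ')^q / q.factorial with hg
  have hfs : Summable (fun p => ‖f p‖) := NormedSpace.norm_expSeries_div_summable _
  have hgs : Summable (fun p => ‖g p‖) := NormedSpace.norm_expSeries_div_summable _
  have hF : HasSum f (Complex.exp ((z/2 : ℂ)*τ)) := by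
    rw [Complex.exp_eq_exp_ℂ]; exact NormedSpace.expSeries_div_hasSum_exp _
  have hG : HasSum g (Complex.exp (-(z/2 : ℂ)*τ')) := by
    rw [Complex.exp_eq_exp_ℂ]; exact NormedSpace.expSeries_div_hasSum_exp _
  have hprod := hF.mul hG (summable_mul_of_summable_norm hfs hgs)
  rw [← Complex.exp_add] at hprod
  have hval : (z/2 : ℂ)*τ + -(z/2 : ℂ)*τ' = ((z * Real.sin θ : ℝ) : ℂ) * Complex.I := by
    push_cast
    rw [hτ, hτ', Complex.sin]
    have : Complex.I^2 = -1 := Complex.I_sq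
    ring_nf
    rw [this]; ring
  rw [hval] at hprod
  have hz := (ze.hasSum_iff).2 hprod
  have key : ∀ k q : ℕ, ∀ T : ℂ, ((-1:ℂ)^q * (z/2:ℂ)^(2*q+k)/(q.factorial * (q+k).factorial)) * T =
     T * (((((-1 : ℝ)^q * (z/2) ^ (2*q+k)) / (q.factorial * (q+k).factorial) : ℝ)) : ℂ) := by
    intro k q T; push_cast; ring
  have hpq : ∀ q : ℕ, τ^q * τ'^q = 1 := fun q => by rw [← mul_pow, hττ, one_pow]
  have hJ : ∀ (k:ℕ) (T : ℂ), HasSum (fun q : ℕ => T * (((((-1 : ℝ)^q * (z/2) ^ (2*q+k)) / (q.factorial * (q+k).factorial) : ℝ)) : ℂ)) (T * (Jn k z : ℂ)) := by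
    intro k T
    exact (Complex.hasSum_ofReal.2 (Jn_summable k z).hasSum).mul_left T
  set Fz : ℤ → ℂ := fun k => if 0 ≤ k then τ^k.toNat * (Jn k.toNat z : ℂ) else
    ((-1)^(-k).toNat * τ'^(-k).toNat) * (Jn (-k).toNat z : ℂ) with hFz
  have hfib : HasSum Fz (Complex.exp (((z * Real.sin θ : ℝ) : ℂ) * Complex.I)) := by
    refine hz.prod_fiberwise fun k => ?_
    by_cases hk : 0 ≤ k
    · obtain ⟨n, rfl⟩ := Int.eq_ofNat_of_zero_le hk
      simp only [hFz, if_pos hk, Int.toNat_natCast]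
      refine (hJ n (τ^n)).congr_fun ?_
      intro q
      rw [← key]
      simp only [ze, hf, hg, Function.comp, Equiv.coe_fn_mk, Int.toNat_natCast, Int.toNat_neg_natCast, add_zero]
      rw [neg_mul, neg_pow, mul_pow, mul_pow, pow_add τ, pow_add, pow_add, pow_mul']
      have := hpq q
      linear_combination ((q.factorial:ℂ)⁻¹ * ((q+n).factorial:ℂ)⁻¹ * (-1)^q * ((z/2:ℂ)^q)^2 * (z/2:ℂ)^n * τ^n : ℂ) * this
    · obtain ⟨n, hn⟩ : ∃ n : ℕ, k = -(n:ℤ) := ⟨(-k).toNat, by omega⟩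
      subst hn
      simp only [hFz, if_neg hk, neg_neg, Int.toNat_natCast]
      refine (hJ n _).congr_fun ?_
      intro q
      rw [← key]
      simp only [ze, hf, hg, Function.comp, Equiv.coe_fn_mk, Int.toNat_natCast, Int.toNat_neg_natCast, add_zero, neg_neg]
      rw [neg_mul, neg_pow, mul_pow, mul_pow, pow_add τ', pow_add, pow_add, pow_add, pow_mul']
      have := hpq q
      linear_combination ((q.factorial:ℂ)⁻¹ * ((q+n).factorial:ℂ)⁻¹ * (-1)^q * (-1)^n * ((z/2:ℂ)^q)^2 * (z/2:ℂ)^n * τ'^n : ℂ) * this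
  have h2 := hfib.nat_add_neg
  have h3 := Complex.hasSum_im h2
  have hτn : ∀ n : ℕ, (τ^n) = Complex.exp (((n*θ:ℝ):ℂ) * Complex.I) := by
    intro n; rw [hτ, ← Complex.exp_nat_mul]; congr 1; push_cast; ring
  have hτn' : ∀ n : ℕ, (τ'^n) = Complex.exp (((-(n*θ):ℝ):ℂ) * Complex.I) := by
    intro n; rw [hτ', ← Complex.exp_nat_mul]; congr 1; push_cast; ring
  have him0 : (Fz 0).im = 0 := by simp [hFz]
  rw [Complex.add_im, Complex.exp_ofReal_mul_I_im, him0, add_zero] at h3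
  refine h3.congr_fun ?_
  intro n
  rcases Nat.eq_zero_or_pos n with rfl | hn
  · simp [hFz]
  · have c1 : (0:ℤ) ≤ n := by omega
    have c2 : ¬ (0:ℤ) ≤ -(n:ℤ) := by omega
    simp only [hFz, if_pos c1, if_neg c2, neg_neg, Int.toNat_natCast]
    have e : ((-1:ℂ)^n) = (((-1:ℝ)^n : ℝ) : ℂ) := by push_cast; rfl
    rw [Complex.add_im, Complex.im_mul_ofReal, Complex.im_mul_ofReal, e, Complex.im_ofReal_mul, hτn, hτn', Complex.exp_ofReal_mul_I_im, Complex.exp_ofReal_mul_I_im, Real.sin_neg]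
    ring

lemma geg_one_sin (θ : ℝ) (k : ℕ) : geg 1 k (Real.cos θ) * Real.sin θ = Real.sin (((k:ℝ)+1)*θ) := by
  induction k using Nat.strong_induction_on with
  | _ k ih =>
    match k, ih with
    | 0, _ => simp [geg]
    | 1, _ =>
      simp [geg]
      rw [show (1+1:ℝ)*θ = 2*θ by ring, Real.sin_two_mul]; ring
    | k+2, ih =>
      have a1 := ih (k+1) (by omega)
      have a0 := ih k (by omega)
      have hk : ((k:ℝ)+2) ≠ 0 := by positivity
      have hr : geg 1 (k+2) (Real.cos θ) = 2 * Real.cos θ * geg 1 (k+1) (Real.cos θ) - geg 1 k (Real.cos θ) := by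
        rw [geg]; field_simp; ring
      rw [hr, sub_mul, mul_assoc, a1, a0]
      push_cast
      have e1 : ((k:ℝ)+2+1)*θ = ((k:ℝ)+1+1)*θ + θ := by ring
      have e2 : ((k:ℝ)+1)*θ = ((k:ℝ)+1+1)*θ - θ := by ring
      rw [e1, e2, Real.sin_add, Real.sin_sub]; ring

/-- A coefficients -/
def aA (z : ℝ) (k : ℕ) : ℝ := (1 + (-1)^k) * Jn (k+1) z
/-- B coefficients -/
def aB (z : ℝ) (k : ℕ) : ℝ := ((k:ℝ)+1) * (1 - (-1)^k) * Jn (k+1) z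

lemma aB_Bd (z : ℝ) : Bd (aB z) := by
  obtain ⟨M, hM, h⟩ := Jn_bound z
  refine ⟨2*M*|z/2|, |z/2|, by positivity, by positivity, fun k => ?_⟩
  have h1 : |(1 - (-1:ℝ)^k)| ≤ 2 := by
    rcases neg_one_pow_eq_or ℝ k with h | h <;> rw [h] <;> norm_num
  have h2 : |(k:ℝ)+1| = k+1 := abs_of_nonneg (by positivity)
  unfold aB
  rw [abs_mul, abs_mul, h2]
  calc ((k:ℝ)+1) * |(1 - (-1:ℝ)^k)| * |Jn (k+1) z| ≤ ((k:ℝ)+1) * 2 * (M * (|z/2|^(k+1)/(k+1).factorial)) := by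
        gcongr
        exact h (k+1)
    _ = _ := by
      rw [Nat.factorial_succ, pow_succ]; push_cast; field_simp

lemma aA_Bd (z : ℝ) : Bd (aA z) := by
  obtain ⟨M, hM, h⟩ := Jn_bound z
  have : Bd (fun k => (1 - (-1:ℝ)^k) * Jn k z) := by
    refine ⟨2*M, |z/2|, by positivity, by positivity, fun k => ?_⟩
    have h1 : |(1 - (-1:ℝ)^k)| ≤ 2 := by
      rcases neg_one_pow_eq_or ℝ k with h | h <;> rw [h] <;> norm_num
    rw [abs_mul, mul_assoc]
    gcongr
    exact h k
  have h2 := this.shift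
  have e : (fun k => (1 - (-1:ℝ)^(k+1)) * Jn (k+1) z) = aA z := by
    funext k; rw [pow_succ, aA]; ring
  rwa [e] at h2

lemma baseA (z : ℝ) (hz : 0 < z) (w : ℝ) (hw : w ∈ Set.Ioo (-1:ℝ) 1) :
    ∑' k, aA z k * geg 1 k w = z * (Real.sqrt (Real.pi/2) * HH (1/2) (z^2 - (z*w)^2)) := by
  set θ := Real.arccos w with hθ
  have hc : Real.cos θ = w := Real.cos_arccos hw.1.le hw.2.le
  have hsp : 0 < Real.sin θ := Real.sin_pos_of_pos_of_lt_pi (Real.arccos_pos.2 hw.2)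
    (by
      rcases lt_or_eq_of_le (Real.arccos_le_pi w) with h | h
      · exact h
      · have := Real.arccos_eq_pi.1 h
        linarith [hw.1])
  have hs2 := Real.sin_sq_add_cos_sq θ
  have ht : z * Real.sin θ ≠ 0 := by positivity
  have e : z^2 - (z*w)^2 = (z*Real.sin θ)^2 := by rw [← hc]; linear_combination (-z^2)*hs2
  rw [e, HH_half _ ht]
  have h := bessel_gen z θ
  have h1 := (hasSum_nat_add_iff' (f := fun n : ℕ => Jn n z * (1 - (-1)^n) * Real.sin (n*θ)) 1).2 h
  simp only [Finset.range_one, Finset.sum_singleton, Nat.cast_zero, zero_mul, Real.sin_zero, mul_zero, sub_zero] at h1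
  have h2 := h1.div_const (Real.sin θ)
  have h3 : HasSum (fun k => aA z k * geg 1 k w) (Real.sin (z * Real.sin θ)/Real.sin θ) := by
    refine h2.congr_fun ?_
    intro k
    push_cast
    rw [← geg_one_sin, hc, aA, pow_succ]
    field_simp
    ring
  rw [h3.tsum_eq]
  field_simp

lemma baseB (z : ℝ) (w : ℝ) :
    ∑' k, aB z k * geg 1 k w = z * w * ∑' k, aA z k * geg 1 k w := by
  have hS := ((aA_Bd z).summable_geg 1 zero_le_one w).hasSum
  have hQ := ((aA_Bd z).shift.summable_geg 1 zero_le_one w).hasSum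
  set S := ∑' k, aA z k * geg 1 k w
  set Q := ∑' k, aA z (k+1) * geg 1 k w
  set q : ℕ → ℝ := fun k => match k with | 0 => 0 | k+1 => aA z (k+1) * geg 1 k w with hq
  have hq' : HasSum q Q := hasSum_shift hQ rfl
  have h1 := (hS.mul_left (2*w)).sub hq'
  have h2 : HasSum (fun k => aA z k * geg 1 (k+1) w) (2*w*S - Q) := by
    refine h1.congr_fun ?_
    intro k
    cases k with
    | zero => simp [hq, geg]; ring
    | succ k =>
      simp only [hq]
      have hr : geg 1 (k+2) w = 2 * w * geg 1 (k+1) w - geg 1 k w := by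
        rw [geg]; field_simp; ring
      rw [hr]; ring
  set p : ℕ → ℝ := fun k => match k with | 0 => 0 | k+1 => aA z k * geg 1 (k+1) w with hp
  have hp' : HasSum p (2*w*S - Q) := hasSum_shift h2 rfl
  have h3 := (hp'.add hQ).mul_left (z/2)
  have h4 : HasSum (fun k => aB z k * geg 1 k w) (z/2 * (2*w*S - Q + Q)) := by
    refine h3.congr_fun ?_
    intro k
    have hb : aB z k = (1 - (-1)^k) * ((z/2) * (Jn k z + Jn (k+2) z)) := by
      rw [← Jn_rec, aB]; ring
    rw [hb]
    cases k with
    | zero => simp [hp, aA]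
    | succ k =>
      simp only [hp, aA]
      rw [show k+1+1+1 = k+1+2 from rfl]
      ring
  rw [h4.tsum_eq]; ring

lemma LA (z : ℝ) (hz : 0 < z) (N : ℕ) (w : ℝ) (hw : w ∈ Set.Icc (-1:ℝ) 1) :
    (2:ℝ)^N * N.factorial * ∑' k, aA z (k+N) * geg ((N:ℝ)+1) k w
      = z^N * (z * (Real.sqrt (Real.pi/2) * TT (1/2) z N (z*w))) := by
  refine iter_geg (aA_Bd z) (fun N w => z^N * (z * (Real.sqrt (Real.pi/2) * TT (1/2) z N (z*w)))) ?_ ?_ N w hw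
  · intro N w
    have h1 : HasDerivAt (fun w : ℝ => z*w) z w := by simpa using (hasDerivAt_id w).const_mul z
    have h2 := (TT_hasDeriv (1/2) z N (z*w) (by
      intro l hl
      have : (2:ℝ)*l ≤ N := by exact_mod_cast hl
      have : (0:ℝ) ≤ l := by positivity
      linarith)).comp w h1
    refine (((h2.const_mul (Real.sqrt (Real.pi/2))).const_mul z).const_mul (z^N)).congr_deriv ?_
    ring
  · intro w hw
    rw [baseA z hz w hw]
    simp [TT, cc_zero]

lemma LB (z : ℝ) (hz : 0 < z) (N : ℕ) (w : ℝ) (hw : w ∈ Set.Icc (-1:ℝ) 1) :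
    (2:ℝ)^N * N.factorial * ∑' k, aB z (k+N) * geg ((N:ℝ)+1) k w
      = z^N * (z * (Real.sqrt (Real.pi/2) * TT (-1/2) z (N+1) (z*w))) := by
  refine iter_geg (aB_Bd z) (fun N w => z^N * (z * (Real.sqrt (Real.pi/2) * TT (-1/2) z (N+1) (z*w)))) ?_ ?_ N w hw
  · intro N w
    have h1 : HasDerivAt (fun w : ℝ => z*w) z w := by simpa using (hasDerivAt_id w).const_mul z
    have h2 := (TT_hasDeriv (-1/2) z (N+1) (z*w) (by
      intro l hl
      have : (2:ℝ)*l ≤ (N+1:ℕ) := by exact_mod_cast hl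
      have : (0:ℝ) ≤ l := by positivity
      linarith)).comp w h1
    refine (((h2.const_mul (Real.sqrt (Real.pi/2))).const_mul z).const_mul (z^N)).congr_deriv ?_
    ring
  · intro w hw
    rw [baseB, baseA z hz w hw]
    have e1 : cc 1 1 = 0 := by simp [cc]
    have e2 : (-1/2:ℝ)+1 = 1/2 := by norm_num
    simp [TT, cc_zero, Finset.sum_range_succ, e1]
    norm_num
    ring

lemma Afun_eq (N : ℕ) (z : ℝ) (hz : 0 < z) (w : ℝ) (hw : w ∈ Set.Icc (-1:ℝ) 1) :
    AfunU ((-1:ℂ)^N) ((N:ℝ)+1) w z =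
      (((-1)^N * Real.sqrt (Real.pi/2) * (((N:ℝ)+1) * TT (1/2) z N (z*w)) : ℝ) : ℂ) := by
  unfold AfunU
  have ht : ∀ k : ℕ, ((-1:ℂ)^N + (-1 : ℂ)^k) * ((z ^ (-((N:ℝ)+1)) * besselJ ((k : ℝ) + ((N:ℝ)+1)) z * geg ((N:ℝ)+1) k w : ℝ) : ℂ)
      = (((-1)^N * (z^(N+1))⁻¹ * (aA z (k+N) * geg ((N:ℝ)+1) k w) : ℝ) : ℂ) := by
    intro k
    have e1 : (k:ℝ) + ((N:ℝ)+1) = ((k+N+1:ℕ):ℝ) := by push_cast; ring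
    have e2 : z ^ (-((N:ℝ)+1)) = (z^(N+1))⁻¹ := by
      rw [Real.rpow_neg hz.le, ← Real.rpow_natCast]; push_cast; rfl
    have e3 : ((-1:ℂ)^N)*((-1:ℂ)^N) = 1 := by rw [← mul_pow]; simp
    rw [e1, besselJ_eq, e2, aA]
    push_cast
    rw [pow_add (-1:ℂ) k N]
    linear_combination (-(-1)^k * ((z:ℂ)^(N+1))⁻¹ * (Jn (k+N+1) z : ℂ) * (geg ((N:ℝ)+1) k w : ℂ)) * e3
  simp only [ht]
  rw [← Complex.ofReal_tsum, tsum_mul_left, ← Complex.ofReal_mul]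
  congr 1
  have h := LA z hz N w hw
  have eg : Real.Gamma ((N:ℝ)+1+1) = ((N:ℝ)+1) * N.factorial := by
    rw [Real.Gamma_add_one (by positivity), Real.Gamma_nat_eq_factorial]
  have e2 : (2:ℝ)^((N:ℝ)+1-1) = 2^N := by rw [add_sub_cancel_right, Real.rpow_natCast]
  rw [eg, e2]
  have hzz : z^(N+1) ≠ 0 := by positivity
  have : z^(N+1) * (z^(N+1))⁻¹ = 1 := mul_inv_cancel₀ hzz
  rw [← mul_assoc (z^N), ← pow_succ] at h
  linear_combination ((N:ℝ)+1) * (-1)^N * (z^(N+1))⁻¹ * h + ((N:ℝ)+1) * (-1)^N * Real.sqrt (Real.pi/2) * TT (1/2) z N (z*w) * this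

lemma Bfun_eq (N : ℕ) (z : ℝ) (hz : 0 < z) (w : ℝ) (hw : w ∈ Set.Icc (-1:ℝ) 1) :
    BfunU ((-1:ℂ)^N) ((N:ℝ)+1) w z =
      (((-1)^N * Real.sqrt (Real.pi/2) * (- TT (-1/2) z (N+1) (z*w)) : ℝ) : ℂ) := by
  unfold BfunU
  have ht : ∀ k : ℕ, ((k:ℂ) + (((N:ℝ)+1 : ℝ) : ℂ)) * ((-1:ℂ)^N - (-1 : ℂ)^k) * ((z ^ (-((N:ℝ)+1)) * besselJ ((k : ℝ) + ((N:ℝ)+1)) z * geg ((N:ℝ)+1) k w : ℝ) : ℂ)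
      = (((-1)^N * (z^(N+1))⁻¹ * (aB z (k+N) * geg ((N:ℝ)+1) k w) : ℝ) : ℂ) := by
    intro k
    have e1 : (k:ℝ) + ((N:ℝ)+1) = ((k+N+1:ℕ):ℝ) := by push_cast; ring
    have e2 : z ^ (-((N:ℝ)+1)) = (z^(N+1))⁻¹ := by
      rw [Real.rpow_neg hz.le, ← Real.rpow_natCast]; push_cast; rfl
    have e3 : ((-1:ℂ)^N)*((-1:ℂ)^N) = 1 := by rw [← mul_pow]; simp
    rw [e1, besselJ_eq, e2, aB]
    push_cast
    rw [pow_add (-1:ℂ) k N]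
    linear_combination ((k+N+1:ℂ) * (-1)^k * ((z:ℂ)^(N+1))⁻¹ * (Jn (k+N+1) z : ℂ) * (geg ((N:ℝ)+1) k w : ℂ)) * e3
  simp only [ht]
  rw [← Complex.ofReal_tsum, tsum_mul_left, ← Complex.ofReal_neg, ← Complex.ofReal_mul]
  congr 1
  have h := LB z hz N w hw
  rw [Real.Gamma_nat_eq_factorial]
  have e2 : (2:ℝ)^((N:ℝ)+1-1) = 2^N := by rw [add_sub_cancel_right, Real.rpow_natCast]
  rw [e2]
  have hzz : z^(N+1) ≠ 0 := by positivity
  have : z^(N+1) * (z^(N+1))⁻¹ = 1 := mul_inv_cancel₀ hzz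
  rw [← mul_assoc (z^N), ← pow_succ] at h
  linear_combination -(-1)^N * (z^(N+1))⁻¹ * h - (-1)^N * Real.sqrt (Real.pi/2) * TT (-1/2) z (N+1) (z*w) * this

lemma Cfun_eq (N : ℕ) (z : ℝ) (hz : 0 < z) (w : ℝ) (hw : w ∈ Set.Icc (-1:ℝ) 1) :
    CfunU ((-1:ℂ)^N) ((N:ℝ)+1) w z =
      (((-1)^N * Real.sqrt (Real.pi/2) * (- TT (1/2) z (N+1) (z*w)) : ℝ) : ℂ) := by
  unfold CfunU
  set F : ℕ → ℂ := fun k => ((-1:ℂ)^N + (-1 : ℂ)^k) * ((z ^ (-((N:ℝ)+1)-1) * besselJ ((k : ℝ) + ((N:ℝ)+1)) z * deriv (geg ((N:ℝ)+1) k) w : ℝ) : ℂ) with hF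
  have h0 : F 0 = 0 := by
    simp only [hF]
    rw [(geg_hasDeriv ((N:ℝ)+1) w 0).1.deriv]; simp
  have ht : ∀ k : ℕ, F (k+1)
      = (((-1)^N * (z^(N+2))⁻¹ * (2*((N:ℝ)+1)) * (aA z (k+(N+1)) * geg (((N+1:ℕ):ℝ)+1) k w) : ℝ) : ℂ) := by
    intro k
    simp only [hF]
    rw [(geg_hasDeriv ((N:ℝ)+1) w k).2.deriv]
    have e1 : ((k+1:ℕ):ℝ) + ((N:ℝ)+1) = ((k+(N+1)+1:ℕ):ℝ) := by push_cast; ring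
    have e2 : z ^ (-((N:ℝ)+1)-1) = (z^(N+2))⁻¹ := by
      rw [← Real.rpow_natCast, ← Real.rpow_neg hz.le]; congr 1; push_cast; ring
    have e3 : ((-1:ℂ)^N)*((-1:ℂ)^N) = 1 := by rw [← mul_pow]; simp
    rw [e1, besselJ_eq, e2, aA]
    push_cast
    rw [pow_add (-1:ℂ) k (N+1), pow_succ (-1:ℂ) k, pow_succ (-1:ℂ) N]
    linear_combination ((-1)^k * ((z:ℂ)^(N+2))⁻¹ * (2*((N:ℂ)+1)) * (Jn (k+(N+1)+1) z : ℂ) * (geg ((N:ℝ)+1+1) k w : ℂ)) * e3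
  have hsm : Summable (fun k => F (k+1)) := by
    simp only [ht]
    rw [Complex.summable_ofReal]
    exact (((aA_Bd z).shiftN (N+1)).summable_geg _ (by positivity) w).mul_left _
  rw [((summable_nat_add_iff 1).1 hsm).tsum_eq_zero_add, h0, zero_add]
  simp only [ht]
  rw [← Complex.ofReal_tsum, tsum_mul_left, ← Complex.ofReal_neg, ← Complex.ofReal_mul]
  congr 1
  have h := LA z hz (N+1) w hw
  rw [Real.Gamma_nat_eq_factorial]
  have e2 : (2:ℝ)^((N:ℝ)+1-1) = 2^N := by rw [add_sub_cancel_right, Real.rpow_natCast]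
  rw [e2]
  have hzz : z^(N+2) ≠ 0 := by positivity
  have : z^(N+2) * (z^(N+2))⁻¹ = 1 := mul_inv_cancel₀ hzz
  rw [← mul_assoc (z^(N+1)), ← pow_succ, Nat.factorial_succ, pow_succ (2:ℝ)] at h
  push_cast at h ⊢
  linear_combination -(-1)^N * (z^(N+2))⁻¹ * h - (-1)^N * Real.sqrt (Real.pi/2) * TT (1/2) z (N+1) (z*w) * this

lemma TT_half (a z : ℝ) (N : ℕ) (s t : ℝ) (ht : t^2 = z^2 - s^2) :
    TT a z N s = ∑ l ∈ Finset.range (N/2+1), 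
      (N.factorial : ℝ) / (2^l * l.factorial * (N-2*l).factorial) * (s^(N-2*l) * besselJt (a+N-l) t) := by
  unfold TT
  symm
  rw [← Finset.sum_subset (s₁ := Finset.range (N/2+1)) (s₂ := Finset.range (N+1))]
  · refine Finset.sum_congr rfl fun l hl => ?_
    rw [Finset.mem_range] at hl
    rw [cc, if_pos (by omega), besselJt_eq, ht]
  · intro l; simp only [Finset.mem_range]; omega
  · intro l _ hl
    rw [Finset.mem_range] at hl
    rw [cc, if_neg (by omega), zero_mul]

lemma gam_quot (N l : ℕ) (h : 2*l ≤ N) (x : ℝ) (hx : x = (N:ℝ)-2*l+1) : Real.Gamma x = (N-2*l).factorial := by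
  rw [← Real.Gamma_nat_eq_factorial, hx, Nat.cast_sub h]; push_cast; rfl

lemma Astar_eq (N : ℕ) (z s t : ℝ) (ht : t^2 = z^2 - s^2) :
    Astar (2*N+4) s t = ((N:ℝ)+1) * TT (1/2) z N s := by
  rw [TT_half _ _ _ _ t ht, Astar, Finset.mul_sum]
  have e : (2*N+4-3)/4+1 = N/2+1 := by omega
  rw [e]
  refine Finset.sum_congr rfl fun l hl => ?_
  rw [Finset.mem_range] at hl
  have e1 : (2*N+4)/2-2-2*l = N-2*l := by omega
  rw [e1, gam_quot (N+1) 0 (by omega) _ (by push_cast; ring),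
    gam_quot N l (by omega) _ (by push_cast; ring)]
  have e2 : (((2*N+4:ℕ):ℝ)-2*l-3)/2 = 1/2+N-l := by push_cast; ring
  rw [e2, Nat.mul_zero, Nat.sub_zero, Nat.factorial_succ]
  push_cast
  field_simp

lemma Bstar_eq (N : ℕ) (z s t : ℝ) (ht : t^2 = z^2 - s^2) :
    Bstar (2*N+4) s t = - TT (-1/2) z (N+1) s := by
  rw [TT_half _ _ _ _ t ht, Bstar]
  have e : (2*N+4-2)/4+1 = (N+1)/2+1 := by omega
  rw [e]
  congr 1
  refine Finset.sum_congr rfl fun l hl => ?_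
  rw [Finset.mem_range] at hl
  have e1 : (2*N+4)/2-1-2*l = N+1-2*l := by omega
  rw [e1, gam_quot (N+1) 0 (by omega) _ (by push_cast; ring),
    gam_quot (N+1) l (by omega) _ (by push_cast; ring)]
  have e2 : (((2*N+4:ℕ):ℝ)-2*l-3)/2 = -1/2+(N+1:ℕ)-l := by push_cast; ring
  rw [e2, Nat.mul_zero, Nat.sub_zero]
  field_simp

lemma Cstar_eq (N : ℕ) (z s t : ℝ) (ht : t^2 = z^2 - s^2) :
    Cstar (2*N+4) s t = - TT (1/2) z (N+1) s := by
  rw [TT_half _ _ _ _ t ht, Cstar]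
  have e : (2*N+4-2)/4+1 = (N+1)/2+1 := by omega
  rw [e]
  congr 1
  refine Finset.sum_congr rfl fun l hl => ?_
  rw [Finset.mem_range] at hl
  have e1 : (2*N+4)/2-1-2*l = N+1-2*l := by omega
  rw [e1, gam_quot (N+1) 0 (by omega) _ (by push_cast; ring),
    gam_quot (N+1) l (by omega) _ (by push_cast; ring)]
  have e2 : (((2*N+4:ℕ):ℝ)-2*l-1)/2 = 1/2+(N+1:ℕ)-l := by push_cast; ring
  rw [e2, Nat.mul_zero, Nat.sub_zero]
  field_simp

lemma ofReal_smul_Cl {m : ℕ} (r : ℝ) (a : Cl m) : (r:ℂ) • a = r • a := by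
  funext S
  exact (Complex.real_smul (x := r) (z := a S)).symm

lemma ip_pos {m : ℕ} (x : Fin m → ℝ) (hx : x ≠ 0) : 0 < ip x x := by
  obtain ⟨i, hi⟩ := Function.ne_iff.1 hx
  refine Finset.sum_pos' (fun j _ => mul_self_nonneg _) ⟨i, Finset.mem_univ _, ?_⟩
  exact mul_self_pos.2 hi

/-- For even `m > 2`, the Clifford-Fourier kernel is the finite sum of Bessel functions
`K_-(x,y) = (-1)^{m/2} (π/2)^{1/2} ( A*_{(m-2)/2}(s,t) + B*_{(m-2)/2}(s,t)
+ (x∧y) C*_{(m-2)/2}(s,t) )`, with `s = ⟨x,y⟩` and `t = |x∧y| = √(|x|²|y|² - s²)`. -/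
theorem kernel_explicit_even (m : ℕ) (hme : Even m) (hm : 2 < m)
    (x y : Fin m → ℝ) (hx : x ≠ 0) (hy : y ≠ 0)
    (s t : ℝ) (hs : s = ip x y) (ht : t = Real.sqrt (ip x x * ip y y - s^2)) :
    Kminus m x y
      = ((-1 : ℝ)^(m/2) * Real.sqrt (Real.pi/2)) •
          ((Astar m s t + Bstar m s t) • (1 : Cl m) + Cstar m s t • wedge m x y) := by
  obtain ⟨N, rfl⟩ : ∃ N, m = 2*N+4 := by
    obtain ⟨r, hr⟩ := hme
    exact ⟨r-2, by omega⟩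
  have hxx := ip_pos x hx
  have hyy := ip_pos y hy
  have hz : 0 < nrm x * nrm y := mul_pos (Real.sqrt_pos.2 hxx) (Real.sqrt_pos.2 hyy)
  have hz2 : (nrm x * nrm y)^2 = ip x x * ip y y := by
    rw [mul_pow, nrm, nrm, Real.sq_sqrt hxx.le, Real.sq_sqrt hyy.le]
  have hCS : s^2 ≤ ip x x * ip y y := by
    rw [hs]
    have := Finset.sum_mul_sq_le_sq_mul_sq Finset.univ x y
    simp only [ip]
    simpa only [pow_two] using this
  have ht2 : t^2 = (nrm x * nrm y)^2 - s^2 := by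
    rw [ht, Real.sq_sqrt (by linarith), hz2]
  unfold Kminus
  rw [← hs]
  set z := nrm x * nrm y with hzd
  have hw : s / z ∈ Set.Icc (-1:ℝ) 1 := by
    have : |s| ≤ z := abs_le_of_sq_le_sq (by rw [hz2]; exact hCS) hz.le
    have h2 := abs_le.1 this
    constructor
    · rw [le_div_iff₀ hz]; linarith
    · rw [div_le_iff₀ hz]; linarith
  have hlam : (((2*N+4:ℕ):ℝ)-2)/2 = (N:ℝ)+1 := by push_cast; ring
  have hI : Complex.I^(2*N+4) = (-1:ℂ)^N := by
    rw [pow_add, pow_mul, Complex.I_sq, Complex.I_pow_four, mul_one]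
  have hzw : z * (s/z) = s := mul_div_cancel₀ _ hz.ne'
  rw [hlam, hI, Afun_eq N z hz _ hw, Bfun_eq N z hz _ hw, Cfun_eq N z hz _ hw, hzw,
    Astar_eq N z s t ht2, Bstar_eq N z s t ht2, Cstar_eq N z s t ht2, ← Complex.ofReal_add,
    ofReal_smul_Cl, ofReal_smul_Cl, smul_add, smul_smul, smul_smul]
  have e1 : (2*N+4)/2 = N+2 := by omega
  have e2 : (-1:ℝ)^(N+2) = (-1)^N := by rw [pow_add]; norm_num
  rw [e1, e2]
  congr 2
  ring

end CliffordFourier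
end
end

section
/- Let P_k denote the Legendre polynomial of degree k, and for z > 0 and w = cos θ ∈ (−1,1) define U(w,z) = Σ_{k≥0} (−1)^k J_{k+1/2}(z) P_k(w) and V(w,z) = Σ_{k≥0} k J_{k+1/2}(z) P_k(w). Then: U(w,z) = (z/(2π))^{1/2} ∫_{−1}^{1} e^{izu} e^{−(z/2)(1−u²)cos θ} J_0( (z/2)(1−u²) sin θ ) du, and V(w,z) = (1/√π)(z/2)^{3/2} ∫_{−1}^{1} e^{izu} e^{(z/2)(1−u²)cos θ} (1−u²) [ cos θ · J_0( (z/2)(1−u²) sin θ ) − sin θ · J_1( (z/2)(1−u²) sin θ ) ] du. -/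
open scoped BigOperators
open MeasureTheory

noncomputable section

namespace CliffordFourier

lemma my_hasSum_congr {f g : ℕ → ℂ} {a : ℂ} (h : ∀ k, f k = g k) : HasSum f a ↔ HasSum g a := by
  rw [funext h]

lemma gen_hasSum (c : ℕ → ℂ) (hc : ∀ k, ‖c k‖ ≤ 1) (h q : ℝ → ℂ) (hh : Continuous h)
    (hq : Continuous q) (a b : ℝ) :
    HasSum (fun k : ℕ => ∫ u in a..b, c k * h u * (q u)^k / (k.factorial : ℂ))
      (∫ u in a..b, h u * ∑' k : ℕ, c k * (q u)^k / (k.factorial : ℂ)) := by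
  obtain ⟨M, hM⟩ := (isCompact_uIcc (a := a) (b := b)).exists_bound_of_continuousOn hq.continuousOn
  obtain ⟨N, hN⟩ := (isCompact_uIcc (a := a) (b := b)).exists_bound_of_continuousOn hh.continuousOn
  have hsum : Summable fun k : ℕ => N * (M ^ k / (k.factorial : ℝ)) :=
    (Real.summable_pow_div_factorial M).mul_left N
  have hbd : ∀ u ∈ Set.uIoc a b, ∀ k : ℕ,
      ‖c k * h u * (q u)^k / (k.factorial : ℂ)‖ ≤ N * (M ^ k / (k.factorial : ℝ)) := by
    intro u hu k
    have hu' := Set.uIoc_subset_uIcc hu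
    have h1 := hM u hu'
    have h2 := hN u hu'
    have h3 := hc k
    rw [norm_div, norm_mul, norm_mul, norm_pow, Complex.norm_natCast, mul_div_assoc]
    have : ‖c k‖ * ‖h u‖ ≤ 1 * N := by gcongr
    rw [one_mul] at this
    have hN0 : 0 ≤ N := le_trans (norm_nonneg _) h2
    gcongr
  refine intervalIntegral.hasSum_integral_of_dominated_convergence
    (fun k _ => N * (M ^ k / (k.factorial : ℝ))) ?_ ?_ ?_ ?_ ?_
  · intro n
    apply Continuous.aestronglyMeasurable
    fun_prop
  · intro n
    exact Filter.Eventually.of_forall fun u hu => hbd u hu n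
  · exact Filter.Eventually.of_forall fun u hu => hsum
  · exact intervalIntegrable_const
  · refine Filter.Eventually.of_forall fun u hu => ?_
    have hs : Summable fun k : ℕ => c k * (q u)^k / (k.factorial : ℂ) := by
      refine Summable.of_norm_bounded (g := fun k : ℕ => ‖q u‖ ^ k / (k.factorial : ℝ))
        (Real.summable_pow_div_factorial _) ?_
      intro k
      rw [norm_div, norm_mul, norm_pow, Complex.norm_natCast, mul_div_assoc]
      exact mul_le_of_le_one_left (by positivity) (hc k)
    refine (my_hasSum_congr fun k => ?_).mpr (hs.hasSum.mul_left (h u))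
    ring

lemma exp_tsum (x : ℂ) : ∑' k : ℕ, x ^ k / (k.factorial : ℂ) = Complex.exp x := by
  rw [Complex.exp_eq_exp_ℂ, NormedSpace.exp_eq_tsum_div]

lemma gen_exp (h q : ℝ → ℂ) (hh : Continuous h) (hq : Continuous q) (a b : ℝ) :
    HasSum (fun k : ℕ => ∫ u in a..b, h u * (q u)^k / (k.factorial : ℂ))
      (∫ u in a..b, h u * Complex.exp (q u)) := by
  have := gen_hasSum (fun _ => 1) (by simp) h q hh hq a b
  simpa [exp_tsum] using this

lemma cos_even (m : ℕ) : ∫ φ in (0:ℝ)..Real.pi, Real.cos φ ^ (2*m)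
    = Real.pi * (2*m).factorial / (4^m * (m.factorial:ℝ)^2) := by
  induction m with
  | zero => simp
  | succ m ih =>
    rw [show 2*(m+1) = 2*m+2 by ring, integral_cos_pow, ih]
    simp only [Real.sin_pi, Real.sin_zero, Nat.factorial_succ]
    push_cast
    have : (m.factorial:ℝ) ≠ 0 := by positivity
    field_simp
    ring

lemma cos_odd (m : ℕ) : ∫ φ in (0:ℝ)..Real.pi, Real.cos φ ^ (2*m+1) = 0 := by
  induction m with
  | zero => simp
  | succ m ih =>
    rw [show 2*(m+1)+1 = (2*m+1)+2 by ring, integral_cos_pow, ih]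
    simp

lemma J0_eq (x : ℝ) : (besselJ 0 x : ℂ) * Real.pi =
    ∫ φ in (0:ℝ)..Real.pi, Complex.exp (Complex.I * x * Real.cos φ) := by
  have h := gen_exp (fun _ => 1) (fun φ => Complex.I * x * Real.cos φ) (by fun_prop)
    (by fun_prop) 0 Real.pi
  have hterm : ∀ k : ℕ, (∫ u in (0:ℝ)..Real.pi, (1:ℂ) * (Complex.I * x * Real.cos u)^k /
      (k.factorial : ℂ)) = (Complex.I * x)^k / (k.factorial : ℂ) *
        ((∫ φ in (0:ℝ)..Real.pi, Real.cos φ ^ k : ℝ) : ℂ) := by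
    intro k
    rw [← intervalIntegral.integral_ofReal, ← intervalIntegral.integral_const_mul]
    congr 1; ext u; push_cast; ring
  simp only [hterm] at h
  have hinj : Function.Injective (fun m : ℕ => 2 * m) := fun a b hab => by simpa using hab
  rw [← hinj.hasSum_iff] at h
  · simp only [one_mul] at h
    rw [← h.tsum_eq, besselJ, Complex.ofReal_tsum, ← tsum_mul_right]
    congr 1; ext j
    simp only [Function.comp, cos_even]
    have e1 : (x/2) ^ (2*(j:ℝ) + 0) = (x/2)^(2*j) := by
      rw [← Real.rpow_natCast]; push_cast; simp
    have e2 : Real.Gamma ((j:ℝ) + 0 + 1) = j.factorial := by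
      rw [add_zero, Real.Gamma_nat_eq_factorial]
    rw [e1, e2]
    push_cast
    have : (j.factorial:ℂ) ≠ 0 := by exact_mod_cast j.factorial_ne_zero
    have : ((2*j).factorial:ℂ) ≠ 0 := by exact_mod_cast (2*j).factorial_ne_zero
    rw [mul_pow, pow_mul Complex.I, Complex.I_sq, div_pow, pow_mul (2:ℂ)]
    norm_num
    field_simp
  · intro n hn
    have : ∃ m, n = 2*m+1 := by
      rcases Nat.even_or_odd' n with ⟨m, h | h⟩
      · exact absurd ⟨m, h.symm⟩ hn
      · exact ⟨m, h⟩
    obtain ⟨m, rfl⟩ := this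
    rw [cos_odd]; simp

lemma J1_eq (x : ℝ) : -(besselJ 1 x : ℂ) * Real.pi =
    ∫ φ in (0:ℝ)..Real.pi, Complex.I * Real.cos φ * Complex.exp (Complex.I * x * Real.cos φ) := by
  have h := gen_exp (fun φ => Complex.I * Real.cos φ) (fun φ => Complex.I * x * Real.cos φ)
    (by fun_prop) (by fun_prop) 0 Real.pi
  have hterm : ∀ k : ℕ, (∫ u in (0:ℝ)..Real.pi, (Complex.I * Real.cos u) *
      (Complex.I * x * Real.cos u)^k /
      (k.factorial : ℂ)) = Complex.I * (Complex.I * x)^k / (k.factorial : ℂ) *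
        ((∫ φ in (0:ℝ)..Real.pi, Real.cos φ ^ (k+1) : ℝ) : ℂ) := by
    intro k
    rw [← intervalIntegral.integral_ofReal, ← intervalIntegral.integral_const_mul]
    congr 1; ext u; push_cast; ring
  simp only [hterm] at h
  have hinj : Function.Injective (fun m : ℕ => 2 * m + 1) := fun a b hab => by simpa using hab
  rw [← hinj.hasSum_iff] at h
  · rw [← h.tsum_eq, besselJ, Complex.ofReal_tsum, ← tsum_neg, ← tsum_mul_right]
    congr 1; ext j
    simp only [Function.comp]
    rw [show 2*j+1+1 = 2*(j+1) by ring, cos_even]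
    have e1 : (x/2) ^ (2*(j:ℝ) + 1) = (x/2)^(2*j+1) := by
      rw [← Real.rpow_natCast]; push_cast; simp
    have e2 : Real.Gamma ((j:ℝ) + 1 + 1) = (j+1).factorial := by
      rw [← Real.Gamma_nat_eq_factorial]; push_cast; rfl
    rw [e1, e2, show 2*(j+1) = 2*j+1+1 by ring, Nat.factorial_succ (2*j+1), Nat.factorial_succ j]
    push_cast
    have : (j.factorial:ℂ) ≠ 0 := by exact_mod_cast j.factorial_ne_zero
    have : ((2*j+1).factorial:ℂ) ≠ 0 := by exact_mod_cast (2*j+1).factorial_ne_zero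
    have : (j:ℂ)+1 ≠ 0 := by exact_mod_cast j.succ_ne_zero
    have hI : Complex.I * (Complex.I * x)^(2*j+1) = -(-1)^j * x^(2*j+1) := by
      rw [mul_pow, pow_succ Complex.I, pow_mul Complex.I, Complex.I_sq]
      linear_combination (-1)^j * (x:ℂ)^(2*j+1) * Complex.I_sq
    rw [hI, div_pow, pow_succ (2:ℂ), pow_mul (2:ℂ)]
    norm_num
    field_simp
    ring
  · intro n hn
    have : ∃ m, n = 2*m := by
      rcases Nat.even_or_odd' n with ⟨m, h | h⟩
      · exact ⟨m, h⟩
      · exact absurd ⟨m, h.symm⟩ hn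
    obtain ⟨m, rfl⟩ := this
    rw [cos_odd]; simp

def qq (θ φ : ℝ) : ℂ := Real.cos θ + Complex.I * Real.sin θ * Real.cos φ

lemma qq_cont (θ : ℝ) : Continuous (qq θ) := by unfold qq; fun_prop

lemma qq_norm (θ φ : ℝ) : ‖qq θ φ‖ ≤ 1 := by
  have h : ‖qq θ φ‖^2 ≤ 1 := by
    rw [← Complex.normSq_eq_norm_sq, Complex.normSq_apply]
    have hr : (qq θ φ).re = Real.cos θ := by simp [qq, -Complex.ofReal_cos, -Complex.ofReal_sin]
    have hi : (qq θ φ).im = Real.sin θ * Real.cos φ := by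
      simp [qq, -Complex.ofReal_cos, -Complex.ofReal_sin]
    rw [hr, hi]
    nlinarith [Real.sin_sq_add_cos_sq θ, mul_nonneg (sq_nonneg (Real.sin θ)) (sq_nonneg (Real.sin φ)), Real.sin_sq_add_cos_sq φ]
  nlinarith [norm_nonneg (qq θ φ)]

lemma qq_rec (θ : ℝ) (k : ℕ) :
    ((k:ℂ)+2) * (∫ φ in (0:ℝ)..Real.pi, qq θ φ ^ (k+2))
      - (2*k+3) * Real.cos θ * (∫ φ in (0:ℝ)..Real.pi, qq θ φ ^ (k+1))
      + (k+1) * (∫ φ in (0:ℝ)..Real.pi, qq θ φ ^ k) = 0 := by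
  have hc := qq_cont θ
  have hd : ∀ φ ∈ Set.uIcc (0:ℝ) Real.pi, HasDerivAt
      (fun φ : ℝ => Complex.I * Real.sin θ * (Real.sin φ : ℂ) * qq θ φ ^ (k+1))
      (((k:ℂ)+2) * qq θ φ ^ (k+2) - (2*k+3) * Real.cos θ * qq θ φ ^ (k+1)
        + (k+1) * qq θ φ ^ k) φ := by
    intro φ _
    have h1 : HasDerivAt (fun φ : ℝ => (Real.sin φ : ℂ)) (Real.cos φ : ℂ) φ :=
      (Real.hasDerivAt_sin φ).ofReal_comp
    have h2 : HasDerivAt (fun φ : ℝ => (Real.cos φ : ℂ)) ((-Real.sin φ : ℝ) : ℂ) φ :=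
      (Real.hasDerivAt_cos φ).ofReal_comp
    have h3 : HasDerivAt (qq θ) (Complex.I * Real.sin θ * ((-Real.sin φ : ℝ) : ℂ)) φ :=
      (h2.const_mul (Complex.I * (Real.sin θ : ℂ))).const_add (Real.cos θ : ℂ)
    have h4 := (h1.const_mul (Complex.I * (Real.sin θ : ℂ))).mul (h3.pow (k+1))
    refine h4.congr_deriv ?_
    have s1 : (Real.sin θ : ℂ)^2 + (Real.cos θ : ℂ)^2 = 1 := by
      exact_mod_cast Real.sin_sq_add_cos_sq θ
    have s2 : (Real.sin φ : ℂ)^2 + (Real.cos φ : ℂ)^2 = 1 := by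
      exact_mod_cast Real.sin_sq_add_cos_sq φ
    have hI := Complex.I_sq
    have hq : qq θ φ = Real.cos θ + Complex.I * Real.sin θ * Real.cos φ := rfl
    rw [Pi.pow_apply]
    generalize qq θ φ = Q at *
    push_cast [Nat.add_sub_cancel] 
    simp only [← Complex.ofReal_sin, ← Complex.ofReal_cos]
    generalize (Real.sin θ : ℂ) = S at *
    generalize (Real.cos θ : ℂ) = C at *
    generalize (Real.sin φ : ℂ) = s at *
    generalize (Real.cos φ : ℂ) = c at *
    have key : Q^2 - 2*C*Q + 1 = S^2*s^2 := by
      rw [hq]; linear_combination (S^2*c^2) * hI - s1 - S^2 * s2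
    have k2 : Complex.I * S * c = Q - C := by rw [hq]; ring
    linear_combination (Q^(k+1)) * k2 - (k+1) * Q^k * key - (k+1) * Q^k * S^2*s^2 * hI
  have hint := intervalIntegral.integral_eq_sub_of_hasDerivAt hd
    (Continuous.intervalIntegrable (by fun_prop) _ _)
  have i1 : ∀ n : ℕ, IntervalIntegrable (fun φ => qq θ φ ^ n) volume 0 Real.pi := fun n =>
    Continuous.intervalIntegrable (by fun_prop) _ _
  rw [intervalIntegral.integral_add (((i1 _).const_mul _).sub ((i1 _).const_mul _))
    ((i1 _).const_mul _), intervalIntegral.integral_sub ((i1 _).const_mul _) ((i1 _).const_mul _),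
    intervalIntegral.integral_const_mul, intervalIntegral.integral_const_mul,
    intervalIntegral.integral_const_mul] at hint
  rw [hint]; simp

lemma geg_laplace (θ : ℝ) (k : ℕ) : (geg (1/2) k (Real.cos θ) : ℂ) * Real.pi =
    ∫ φ in (0:ℝ)..Real.pi, qq θ φ ^ k := by
  induction k using Nat.strong_induction_on with
  | _ k ih =>
    match k with
    | 0 => simp [geg]
    | 1 =>
      have := cos_odd 0
      have h2 : ∫ φ in (0:ℝ)..Real.pi, (Real.cos φ : ℂ) = 0 := by
        rw [intervalIntegral.integral_ofReal]; simp
      simp only [pow_one, qq]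
      rw [intervalIntegral.integral_add (by simp) (Continuous.intervalIntegrable (by fun_prop) _ _),
        intervalIntegral.integral_const_mul, h2]
      simp [geg]; ring
    | k+2 =>
      have h0 := ih k (by omega)
      have h1 := ih (k+1) (by omega)
      have hr := qq_rec θ k
      rw [← h0, ← h1] at hr
      have hk : (k:ℂ)+2 ≠ 0 := by exact_mod_cast (k+1).succ_ne_zero
      apply mul_left_cancel₀ hk
      rw [geg]
      generalize geg (1/2) (k+1) (Real.cos θ) = A at *
      generalize geg (1/2) k (Real.cos θ) = B at *
      generalize Real.cos θ = C at *
      generalize (∫ φ in (0:ℝ)..Real.pi, qq θ φ ^ (k+2)) = X at *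
      push_cast
      field_simp
      linear_combination -hr

lemma geg_bound_s9 (θ : ℝ) (k : ℕ) : ‖(geg (1/2) k (Real.cos θ) : ℂ)‖ ≤ 1 := by
  have h := geg_laplace θ k
  have h2 : ‖∫ φ in (0:ℝ)..Real.pi, qq θ φ ^ k‖ ≤ 1 * |Real.pi - 0| := by
    apply intervalIntegral.norm_integral_le_of_norm_le_const
    intro φ _
    rw [norm_pow]
    exact pow_le_one₀ (norm_nonneg _) (qq_norm θ φ)
  rw [← h, norm_mul] at h2
  have hp := Real.pi_pos
  rw [sub_zero, Complex.norm_real, Complex.norm_real, Real.norm_eq_abs Real.pi] at h2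
  rw [Complex.norm_real]
  exact le_of_mul_le_mul_right h2 (by positivity)

lemma genfun0 (θ t : ℝ) : ∑' k : ℕ, (geg (1/2) k (Real.cos θ) : ℂ) * (t:ℂ)^k / (k.factorial : ℂ)
    = ((Real.exp (t * Real.cos θ) * besselJ 0 (t * Real.sin θ) : ℝ) : ℂ) := by
  have hc := qq_cont θ
  have hp : (Real.pi : ℂ) ≠ 0 := by exact_mod_cast Real.pi_ne_zero
  have h := gen_exp (fun _ => 1) (fun φ => t * qq θ φ) (by fun_prop) (by fun_prop) 0 Real.pi
  have hterm : ∀ k : ℕ, (∫ u in (0:ℝ)..Real.pi, (1:ℂ) * (t * qq θ u)^k /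
      (k.factorial : ℂ)) = (geg (1/2) k (Real.cos θ) : ℂ) * (t:ℂ)^k / (k.factorial : ℂ)
        * Real.pi := by
    intro k
    rw [show (geg (1/2) k (Real.cos θ) : ℂ) * (t:ℂ)^k / (k.factorial : ℂ) * Real.pi
      = (t:ℂ)^k / (k.factorial : ℂ) * ((geg (1/2) k (Real.cos θ) : ℂ) * Real.pi) by ring,
      geg_laplace, ← intervalIntegral.integral_const_mul]
    congr 1; ext u; ring
  simp only [hterm] at h
  apply mul_right_cancel₀ hp
  rw [← tsum_mul_right, h.tsum_eq, Complex.ofReal_mul, mul_assoc, J0_eq,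
    ← intervalIntegral.integral_const_mul]
  congr 1; ext u
  rw [Complex.ofReal_exp, ← Complex.exp_add, one_mul, qq]
  congr 1; push_cast; ring

lemma genfun1 (θ t : ℝ) :
    ∑' k : ℕ, (geg (1/2) (k+1) (Real.cos θ) : ℂ) * (t:ℂ)^k / (k.factorial : ℂ)
    = ((Real.exp (t * Real.cos θ) * (Real.cos θ * besselJ 0 (t * Real.sin θ)
      - Real.sin θ * besselJ 1 (t * Real.sin θ)) : ℝ) : ℂ) := by
  have hc := qq_cont θ
  have hp : (Real.pi : ℂ) ≠ 0 := by exact_mod_cast Real.pi_ne_zero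
  have h := gen_exp (qq θ) (fun φ => t * qq θ φ) (by fun_prop) (by fun_prop) 0 Real.pi
  have hterm : ∀ k : ℕ, (∫ u in (0:ℝ)..Real.pi, qq θ u * (t * qq θ u)^k /
      (k.factorial : ℂ)) = (geg (1/2) (k+1) (Real.cos θ) : ℂ) * (t:ℂ)^k / (k.factorial : ℂ)
        * Real.pi := by
    intro k
    rw [show (geg (1/2) (k+1) (Real.cos θ) : ℂ) * (t:ℂ)^k / (k.factorial : ℂ) * Real.pi
      = (t:ℂ)^k / (k.factorial : ℂ) * ((geg (1/2) (k+1) (Real.cos θ) : ℂ) * Real.pi) by ring,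
      geg_laplace, ← intervalIntegral.integral_const_mul]
    congr 1; ext u; ring
  simp only [hterm] at h
  apply mul_right_cancel₀ hp
  have e : ((Real.exp (t * Real.cos θ) * (Real.cos θ * besselJ 0 (t * Real.sin θ)
      - Real.sin θ * besselJ 1 (t * Real.sin θ)) : ℝ) : ℂ) * Real.pi
      = ((Real.exp (t * Real.cos θ) : ℝ) : ℂ) * (
        (Real.cos θ : ℂ) * ((besselJ 0 (t * Real.sin θ) : ℂ) * Real.pi)
        + (Real.sin θ : ℂ) * (-(besselJ 1 (t * Real.sin θ) : ℂ) * Real.pi)) := by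
    push_cast; ring
  rw [← tsum_mul_right, h.tsum_eq, e, J0_eq, J1_eq,
    ← intervalIntegral.integral_const_mul, ← intervalIntegral.integral_const_mul,
    ← intervalIntegral.integral_add (Continuous.intervalIntegrable (by fun_prop) _ _)
      (Continuous.intervalIntegrable (by fun_prop) _ _),
    ← intervalIntegral.integral_const_mul]
  congr 1; ext u
  have : Complex.exp (t * qq θ u) = ((Real.exp (t * Real.cos θ) : ℝ) : ℂ) *
      Complex.exp (Complex.I * (t * Real.sin θ : ℝ) * Real.cos u) := by
    rw [Complex.ofReal_exp, ← Complex.exp_add, qq]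
    congr 1; push_cast; ring
  rw [this, qq]; ring

lemma mom_even (j k : ℕ) : ∫ u in (-1:ℝ)..1, (1-u^2)^k * u^(2*j) =
    Real.Gamma (j+1/2) * k.factorial / Real.Gamma (j+k+3/2) := by
  induction k generalizing j with
  | zero =>
    have hg : Real.Gamma ((j:ℝ)+(0:ℕ)+3/2) = (j+1/2) * Real.Gamma (j+1/2) := by
      rw [← Real.Gamma_add_one (by positivity)]; congr 1; push_cast; ring
    have : Real.Gamma ((j:ℝ)+1/2) ≠ 0 := (Real.Gamma_pos_of_pos (by positivity)).ne'
    rw [hg]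
    simp only [pow_zero, one_mul, integral_pow]
    rw [Odd.neg_one_pow ⟨j, rfl⟩]
    simp
    field_simp
    norm_num
  | succ k ih =>
    have h : ∀ u : ℝ, (1-u^2)^(k+1) * u^(2*j) = (1-u^2)^k * u^(2*j) - (1-u^2)^k * u^(2*(j+1)) := by
      intro u; ring
    simp only [h]
    rw [intervalIntegral.integral_sub (Continuous.intervalIntegrable (by fun_prop) _ _)
      (Continuous.intervalIntegrable (by fun_prop) _ _), ih, ih]
    have g1 : Real.Gamma (((j+1:ℕ):ℝ)+1/2) = (j+1/2) * Real.Gamma (j+1/2) := by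
      rw [← Real.Gamma_add_one (by positivity)]; congr 1; push_cast; ring
    have g2 : Real.Gamma (((j+1:ℕ):ℝ)+k+3/2) = (j+k+3/2) * Real.Gamma (j+k+3/2) := by
      rw [← Real.Gamma_add_one (by positivity)]; congr 1; push_cast; ring
    have g3 : Real.Gamma ((j:ℝ)+(k+1:ℕ)+3/2) = (j+k+3/2) * Real.Gamma (j+k+3/2) := by
      rw [← Real.Gamma_add_one (by positivity)]; congr 1; push_cast; ring
    have : Real.Gamma ((j:ℝ)+k+3/2) ≠ 0 := (Real.Gamma_pos_of_pos (by positivity)).ne'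
    have : (j:ℝ)+k+3/2 ≠ 0 := by positivity
    rw [g1, g2, g3, Nat.factorial_succ]
    push_cast
    field_simp
    ring

lemma mom_odd (j k : ℕ) : ∫ u in (-1:ℝ)..1, (1-u^2)^k * u^(2*j+1) = 0 := by
  have h := intervalIntegral.integral_comp_neg (a := -1) (b := 1)
    (fun u : ℝ => (1-u^2)^k * u^(2*j+1))
  have h2 : ∀ u : ℝ, (1-(-u)^2)^k * (-u)^(2*j+1) = -((1-u^2)^k * u^(2*j+1)) := by
    intro u
    rw [Odd.neg_pow ⟨j, rfl⟩]; ring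
  simp only [h2, intervalIntegral.integral_neg, neg_neg] at h
  linarith

lemma gamma_half (j : ℕ) : Real.Gamma (j+1/2) * (4^j * j.factorial) =
    (2*j).factorial * Real.sqrt Real.pi := by
  induction j with
  | zero => simpa using Real.Gamma_one_half_eq
  | succ j ih =>
    have g1 : Real.Gamma (((j+1:ℕ):ℝ)+1/2) = (j+1/2) * Real.Gamma (j+1/2) := by
      rw [← Real.Gamma_add_one (by positivity)]; congr 1; push_cast; ring
    rw [g1, show 2*(j+1) = 2*j+1+1 by ring, Nat.factorial_succ, Nat.factorial_succ,
      Nat.factorial_succ]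
    push_cast
    linear_combination (4*(j+1/2)*(j+1)) * ih

lemma poisson (z : ℝ) (hz : 0 < z) (k : ℕ) : (besselJ ((k:ℝ)+1/2) z : ℂ) =
    ((Real.sqrt (z/(2*Real.pi)) : ℝ) : ℂ) * ((z/2 : ℝ) : ℂ)^k / (k.factorial : ℂ) *
      ∫ u in (-1:ℝ)..1, (((1-u^2)^k : ℝ) : ℂ) * Complex.exp (Complex.I * z * u) := by
  have h := gen_exp (fun u => (((1-u^2)^k : ℝ) : ℂ)) (fun u => Complex.I * z * u)
    (by fun_prop) (by fun_prop) (-1) 1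
  have hterm : ∀ n : ℕ, (∫ u in (-1:ℝ)..1, (((1-u^2)^k : ℝ) : ℂ) * (Complex.I * z * u)^n /
      (n.factorial : ℂ)) = (Complex.I * z)^n / (n.factorial : ℂ) *
        ((∫ u in (-1:ℝ)..1, (1-u^2)^k * u^n : ℝ) : ℂ) := by
    intro n
    rw [← intervalIntegral.integral_ofReal, ← intervalIntegral.integral_const_mul]
    congr 1; ext u; push_cast; ring
  simp only [hterm] at h
  have hinj : Function.Injective (fun m : ℕ => 2 * m) := fun a b hab => by simpa using hab
  rw [← hinj.hasSum_iff] at h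
  · rw [← h.tsum_eq, besselJ, Complex.ofReal_tsum, ← tsum_mul_left]
    congr 1; ext j
    simp only [Function.comp, mom_even]
    have e1 : (z/2) ^ (2*(j:ℝ) + (k+1/2)) = (z/2)^(2*j) * (z/2)^k * Real.sqrt (z/2) := by
      rw [← add_assoc, Real.rpow_add (by positivity), Real.rpow_add (by positivity),
        Real.sqrt_eq_rpow, Real.rpow_natCast]
      congr 2
      rw [← Real.rpow_natCast]; push_cast; rfl
    have e2 : (j:ℝ) + (k+1/2) + 1 = j+k+3/2 := by ring
    have e3 : Real.sqrt (z/(2*Real.pi)) = Real.sqrt (z/2) / Real.sqrt Real.pi := by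
      rw [← Real.sqrt_div (by positivity)]; congr 1; field_simp
    have hI : (Complex.I * z)^(2*j) = (((-1)^j * z^(2*j) : ℝ) : ℂ) := by
      rw [mul_pow, pow_mul Complex.I, Complex.I_sq]; push_cast; rfl
    rw [e1, e2, e3, hI]
    norm_cast
    have hG : Real.Gamma ((j:ℝ)+k+3/2) ≠ 0 := (Real.Gamma_pos_of_pos (by positivity)).ne'
    have hsp : Real.sqrt Real.pi ≠ 0 := (Real.sqrt_pos.mpr Real.pi_pos).ne'
    have hg := gamma_half j
    have hg' : Real.Gamma (j+1/2) = (2*j).factorial * Real.sqrt Real.pi / (4^j * j.factorial) := by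
      rw [← hg]; field_simp
    rw [hg', div_pow z 2 (2*j), pow_mul (2:ℝ)]
    norm_num
    field_simp
  · intro n hn
    have : ∃ m, n = 2*m+1 := by
      rcases Nat.even_or_odd' n with ⟨m, h | h⟩
      · exact absurd ⟨m, h.symm⟩ hn
      · exact ⟨m, h⟩
    obtain ⟨m, rfl⟩ := this
    rw [mom_odd]; simp

/-- Integral representations for
`U(w,z) = Σ_{k≥0} (-1)^k J_{k+1/2}(z) P_k(w)` and
`V(w,z) = Σ_{k≥0} k J_{k+1/2}(z) P_k(w)`, with `P_k = C_k^{1/2}` the Legendre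
polynomial and `w = cos θ`, `θ ∈ (0,π)`. -/
theorem UV_integral_representation (z : ℝ) (hz : 0 < z)
    (θ : ℝ) (hθ : θ ∈ Set.Ioo (0 : ℝ) Real.pi) (w : ℝ) (hw : w = Real.cos θ) :
    ((∑' k : ℕ, (-1 : ℝ)^k * besselJ ((k:ℝ) + 1/2) z * geg (1/2) k w : ℝ) : ℂ)
      = ((Real.sqrt (z/(2*Real.pi)) : ℝ) : ℂ) *
          ∫ u in (-1 : ℝ)..1,
            Complex.exp (Complex.I * z * u) *
              ((Real.exp (-(z/2) * (1 - u^2) * Real.cos θ)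
                * besselJ 0 ((z/2) * (1 - u^2) * Real.sin θ) : ℝ) : ℂ) ∧
    ((∑' k : ℕ, (k:ℝ) * besselJ ((k:ℝ) + 1/2) z * geg (1/2) k w : ℝ) : ℂ)
      = (((1/Real.sqrt Real.pi) * (z/2) ^ ((3:ℝ)/2) : ℝ) : ℂ) *
          ∫ u in (-1 : ℝ)..1,
            Complex.exp (Complex.I * z * u) *
              ((Real.exp ((z/2) * (1 - u^2) * Real.cos θ) * (1 - u^2) *
                (Real.cos θ * besselJ 0 ((z/2) * (1 - u^2) * Real.sin θ)
                  - Real.sin θ * besselJ 1 ((z/2) * (1 - u^2) * Real.sin θ)) : ℝ) : ℂ) := by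
  subst hw
  constructor
  · rw [Complex.ofReal_tsum]
    have h := gen_hasSum (fun k => (geg (1/2) k (Real.cos θ) : ℂ)) (geg_bound_s9 θ)
      (fun u => Complex.exp (Complex.I * z * u)) (fun u => ((-(z/2) * (1 - u^2) : ℝ) : ℂ))
      (by fun_prop) (by fun_prop) (-1) 1
    simp only [genfun0] at h
    have h2 : ∀ u : ℝ, besselJ 0 (-(z/2) * (1-u^2) * Real.sin θ)
        = besselJ 0 ((z/2) * (1-u^2) * Real.sin θ) := by
      intro u
      unfold besselJ
      congr 1; ext j
      have e : ∀ x : ℝ, x ^ (2*(j:ℝ)+0) = x^(2*j) := by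
        intro x; rw [← Real.rpow_natCast]; push_cast; simp
      rw [e, e, show -(z/2) * (1-u^2) * Real.sin θ / 2 = -((z/2) * (1-u^2) * Real.sin θ / 2) by ring,
        Even.neg_pow (even_two_mul j)]
    simp only [h2] at h
    rw [← h.tsum_eq, ← tsum_mul_left]
    congr 1; ext k
    rw [Complex.ofReal_mul, Complex.ofReal_mul, poisson z hz k]
    rw [show (((-1:ℝ)^k : ℝ) : ℂ) * (((Real.sqrt (z/(2*Real.pi)) : ℝ) : ℂ) * ((z/2 : ℝ) : ℂ)^k
      / (k.factorial : ℂ) * ∫ u in (-1:ℝ)..1, (((1-u^2)^k : ℝ) : ℂ) *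
        Complex.exp (Complex.I * z * u)) * (geg (1/2) k (Real.cos θ) : ℂ)
      = ((Real.sqrt (z/(2*Real.pi)) : ℝ) : ℂ) * (((-1:ℂ)^k * ((z/2 : ℝ) : ℂ)^k
      / (k.factorial : ℂ) * (geg (1/2) k (Real.cos θ) : ℂ)) * ∫ u in (-1:ℝ)..1,
        (((1-u^2)^k : ℝ) : ℂ) * Complex.exp (Complex.I * z * u)) by push_cast; ring,
      ← intervalIntegral.integral_const_mul]
    congr 2; ext u
    push_cast
    rw [mul_pow, neg_pow ((z:ℂ)/2)]
    ring
  · rw [Complex.ofReal_tsum]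
    have h := gen_hasSum (fun k => (geg (1/2) (k+1) (Real.cos θ) : ℂ)) (fun k => geg_bound_s9 θ (k+1))
      (fun u => Complex.exp (Complex.I * z * u) * ((1-u^2 : ℝ):ℂ))
      (fun u => (((z/2) * (1 - u^2) : ℝ) : ℂ))
      (by fun_prop) (by fun_prop) (-1) 1
    simp only [genfun1] at h
    have hconst : (1/Real.sqrt Real.pi) * (z/2) ^ ((3:ℝ)/2)
        = Real.sqrt (z/(2*Real.pi)) * (z/2) := by
      have e3 : Real.sqrt (z/(2*Real.pi)) = Real.sqrt (z/2) / Real.sqrt Real.pi := by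
        rw [← Real.sqrt_div (by positivity)]; congr 1; field_simp
      rw [e3, show (3:ℝ)/2 = 1/2 + 1 by norm_num, Real.rpow_add (by positivity), Real.rpow_one,
        ← Real.sqrt_eq_rpow]
      ring
    have h3 : HasSum (fun k : ℕ => (((k:ℝ) * besselJ ((k:ℝ) + 1/2) z *
        geg (1/2) k (Real.cos θ) : ℝ) : ℂ)) ((((1/Real.sqrt Real.pi) * (z/2) ^ ((3:ℝ)/2) : ℝ) : ℂ) *
          ∫ u in (-1 : ℝ)..1, Complex.exp (Complex.I * z * u) * ((1-u^2 : ℝ):ℂ) *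
            ((Real.exp ((z/2) * (1 - u^2) * Real.cos θ) *
            (Real.cos θ * besselJ 0 ((z/2) * (1 - u^2) * Real.sin θ)
                  - Real.sin θ * besselJ 1 ((z/2) * (1 - u^2) * Real.sin θ)) : ℝ) : ℂ)) := by
      rw [← hasSum_nat_add_iff' 1]
      simp only [Finset.sum_range_one, Nat.cast_zero, zero_mul, Complex.ofReal_zero, sub_zero]
      refine (my_hasSum_congr fun k => ?_).mpr
        (h.mul_left (((1/Real.sqrt Real.pi) * (z/2) ^ ((3:ℝ)/2) : ℝ) : ℂ))
      rw [Complex.ofReal_mul, Complex.ofReal_mul, poisson z hz (k+1), hconst]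
      have hk : ((k:ℂ)+1) ≠ 0 := by exact_mod_cast k.succ_ne_zero
      have hf : (k.factorial:ℂ) ≠ 0 := by exact_mod_cast k.factorial_ne_zero
      have e : ∀ X : ℂ, (((k+1:ℕ):ℝ):ℂ) * (((Real.sqrt (z/(2*Real.pi)) : ℝ) : ℂ) *
        ((z/2 : ℝ) : ℂ)^(k+1) / ((k+1).factorial : ℂ) * X) * (geg (1/2) (k+1) (Real.cos θ) : ℂ)
        = ((Real.sqrt (z/(2*Real.pi)) * (z/2) : ℝ) : ℂ) * ((((z/2 : ℝ) : ℂ)^k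
        / (k.factorial : ℂ) * (geg (1/2) (k+1) (Real.cos θ) : ℂ)) * X) := by
        intro X
        rw [Nat.factorial_succ]; push_cast; field_simp; ring
      rw [e, ← intervalIntegral.integral_const_mul]
      congr 2; ext u
      push_cast
      rw [mul_pow]
      ring
    rw [h3.tsum_eq]
    congr 2; ext u
    push_cast; ring

end CliffordFourier
end
end
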